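/- Let (X, d, T) be a topological dynamical system. Then for every δ ∈ (0,1), the upper metric mean dimension satisfies mdim̄_M(X,d,T) = limsup_{ε→0} (1/log(1/ε)) · sup_{μ ∈ E_T(X)} h̲_μ^K(ε, δ), where h̲_μ^K denotes the lower Katok entropy. -/

import Mathlib

open Filter MeasureTheory Set Topology

variable {X : Type*}

/-- The dynamical (Bowen) metric `d_n(x,y) = max_{0 ≤ k ≤ n-1} d(T^k x, T^k y)`. -/
noncomputable def dynDist [MetricSpace X] (T : X → X) (n : ℕ) (x y : X) : ℝ :=
  ⨆ k ∈ Finset.range n, dist (T^[k] x) (T^[k] y)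

/-- The open dynamical ball `B_n(x, ε) = {y : d_n(x,y) < ε}`. -/
def dynBall [MetricSpace X] (T : X → X) (n : ℕ) (x : X) (ε : ℝ) : Set X :=
  {y | dynDist T n x y < ε}

/-- `s_n(K, ε)`: the maximal cardinality of an `(n,ε)`-separated subset of `K`. -/
noncomputable def sepNum [MetricSpace X] (T : X → X) (n : ℕ) (K : Set X) (ε : ℝ) : ℕ :=
  sSup {m | ∃ E : Finset X, ↑E ⊆ K ∧
    (∀ x ∈ E, ∀ y ∈ E, x ≠ y → ε < dynDist T n x y) ∧ E.card = m}

/-- `S(K, ε) = limsup_n (1/n) log s_n(K, ε)`. -/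
noncomputable def sepEnt [MetricSpace X] (T : X → X) (K : Set X) (ε : ℝ) : EReal :=
  limsup (fun n : ℕ => ((Real.log (sepNum T n K ε) / n : ℝ) : EReal)) atTop

/-- `r_n(K, ε)`: the minimal cardinality of an `(n,ε)`-spanning set for `K`. -/
noncomputable def spanNum [MetricSpace X] (T : X → X) (n : ℕ) (K : Set X) (ε : ℝ) : ℕ :=
  sInf {m | ∃ F : Finset X, (∀ x ∈ K, ∃ y ∈ F, dynDist T n x y ≤ ε) ∧ F.card = m}

/-- `R(K, ε) = limsup_n (1/n) log r_n(K, ε)`. -/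
noncomputable def spanEnt [MetricSpace X] (T : X → X) (K : Set X) (ε : ℝ) : EReal :=
  limsup (fun n : ℕ => ((Real.log (spanNum T n K ε) / n : ℝ) : EReal)) atTop

/-- Upper metric mean dimension. -/
noncomputable def mdimUpper [MetricSpace X] (T : X → X) : EReal :=
  limsup (fun ε : ℝ => sepEnt T univ ε / ((Real.log (1 / ε) : ℝ) : EReal)) (𝓝[>] (0:ℝ))

/-- Lower metric mean dimension. -/
noncomputable def mdimLower [MetricSpace X] (T : X → X) : EReal :=
  liminf (fun ε : ℝ => sepEnt T univ ε / ((Real.log (1 / ε) : ℝ) : EReal)) (𝓝[>] (0:ℝ))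

/-- The ergodic `T`-invariant Borel probability measures. -/
def ergodicMeasures [MeasurableSpace X] (T : X → X) : Set (Measure X) :=
  {μ | IsProbabilityMeasure μ ∧ Ergodic T μ}

/-- `U` is a finite open cover of `X`. -/
def IsFiniteOpenCover [TopologicalSpace X] (U : Finset (Set X)) : Prop :=
  (∀ V ∈ U, IsOpen V) ∧ ⋃₀ (U : Set (Set X)) = univ

/-- The cover `U^n = ⋁_{i=0}^{n-1} T^{-i} U`. -/
def dynRefine (T : X → X) (U : Finset (Set X)) (n : ℕ) : Set (Set X) :=
  {V | ∃ f : Fin n → Set X, (∀ i, f i ∈ U) ∧ V = ⋂ i : Fin n, T^[(i : ℕ)] ⁻¹' f i}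

/-- `N(C)`: the minimal cardinality of a subcover of `C`. -/
noncomputable def coverNum (C : Set (Set X)) : ℕ :=
  sInf {m | ∃ F : Finset (Set X), ↑F ⊆ C ∧ ⋃₀ (F : Set (Set X)) = univ ∧ F.card = m}

/-- `N_μ(U^n, δ)`: minimal number of members of `U^n` needed to cover a set of measure ≥ δ. -/
noncomputable def shapiraNum [MeasurableSpace X] (T : X → X) (μ : Measure X)
    (U : Finset (Set X)) (n : ℕ) (δ : ℝ) : ℕ :=
  sInf {m | ∃ F : Finset (Set X), ↑F ⊆ dynRefine T U n ∧
    ENNReal.ofReal δ ≤ μ (⋃₀ (F : Set (Set X))) ∧ F.card = m}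

/-- Shapira's entropy `h_μ^S(U, δ) = limsup_n (1/n) log N_μ(U^n, δ)`. -/
noncomputable def shapiraEnt [MeasurableSpace X] (T : X → X) (μ : Measure X)
    (U : Finset (Set X)) (δ : ℝ) : EReal :=
  limsup (fun n : ℕ => ((Real.log (shapiraNum T μ U n δ) / n : ℝ) : EReal)) atTop

/-- `N_μ^δ(n, ε)`: smallest number of open `(n,ε)`-dynamical balls whose union has
measure `> δ`. -/
noncomputable def katokNum [MetricSpace X] [MeasurableSpace X] (T : X → X) (μ : Measure X)
    (n : ℕ) (ε δ : ℝ) : ℕ :=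
  sInf {m | ∃ F : Finset X, ENNReal.ofReal δ < μ (⋃ x ∈ F, dynBall T n x ε) ∧ F.card = m}

/-- Katok's entropy `h_μ^K(ε, δ) = limsup_n (1/n) log N_μ^δ(n, ε)`. -/
noncomputable def katokEnt [MetricSpace X] [MeasurableSpace X] (T : X → X) (μ : Measure X)
    (ε δ : ℝ) : EReal :=
  limsup (fun n : ℕ => ((Real.log (katokNum T μ n ε δ) / n : ℝ) : EReal)) atTop

/-- Lower Katok entropy `h̲_μ^K(ε, δ) = liminf_n (1/n) log N_μ^δ(n, ε)`. -/
noncomputable def katokEntLower [MetricSpace X] [MeasurableSpace X] (T : X → X) (μ : Measure X)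
    (ε δ : ℝ) : EReal :=
  liminf (fun n : ℕ => ((Real.log (katokNum T μ n ε δ) / n : ℝ) : EReal)) atTop

/-- `Ñ_μ^δ(n, ε)`: smallest number of sets of `d_n`-diameter ≤ ε whose union has
measure `> δ`. -/
noncomputable def katokNumTilde [MetricSpace X] [MeasurableSpace X] (T : X → X) (μ : Measure X)
    (n : ℕ) (ε δ : ℝ) : ℕ :=
  sInf {m | ∃ F : Finset (Set X), (∀ A ∈ F, ∀ x ∈ A, ∀ y ∈ A, dynDist T n x y ≤ ε) ∧
    ENNReal.ofReal δ < μ (⋃₀ (F : Set (Set X))) ∧ F.card = m}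

/-- Brin–Katok local entropy `h_μ^{BK}(x, ε) = limsup_n -(1/n) log μ(B_n(x, ε))`. -/
noncomputable def brinKatok [MetricSpace X] [MeasurableSpace X] (T : X → X) (μ : Measure X)
    (x : X) (ε : ℝ) : EReal :=
  limsup (fun n : ℕ => -(ENNReal.log (μ (dynBall T n x ε))) / (n : EReal)) atTop

/-- Lower Brin–Katok local entropy `h̲_μ^{BK}(x, ε) = liminf_n -(1/n) log μ(B_n(x, ε))`. -/
noncomputable def brinKatokLower [MetricSpace X] [MeasurableSpace X] (T : X → X) (μ : Measure X)
    (x : X) (ε : ℝ) : EReal :=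
  liminf (fun n : ℕ => -(ENNReal.log (μ (dynBall T n x ε))) / (n : EReal)) atTop

/-- Local entropy function `h_d(x, ε) = inf { S(K, ε) : K closed neighborhood of x }`. -/
noncomputable def locEnt [MetricSpace X] (T : X → X) (x : X) (ε : ℝ) : EReal :=
  ⨅ K ∈ {K : Set X | IsClosed K ∧ K ∈ 𝓝 x}, sepEnt T K ε

/-- Local spanning entropy `h̃_d(x, ε) = inf { R(K, ε) : K closed neighborhood of x }`. -/
noncomputable def locSpanEnt [MetricSpace X] (T : X → X) (x : X) (ε : ℝ) : EReal :=
  ⨅ K ∈ {K : Set X | IsClosed K ∧ K ∈ 𝓝 x}, spanEnt T K ε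

/-- `U_x^n`: the union of all cells of `U^n` containing `x`. -/
def dynCoverCell (T : X → X) (U : Finset (Set X)) (n : ℕ) (x : X) : Set X :=
  ⋃₀ {V | V ∈ dynRefine T U n ∧ x ∈ V}

/-- Costs of finite coding schemes at scale `ε` along the times `S`. -/
def IsCode [MetricSpace X] (T : X → X) (ε : ℝ) (S : Set ℕ) (c : X → ℝ) : Prop :=
  ∃ (k : ℕ) (φ : Fin k → X → ℝ) (w : Fin k → ℝ),
    (∀ i, Continuous (φ i)) ∧ (∀ i x, 0 ≤ φ i x) ∧ (∀ x, ∑ i, φ i x = 1) ∧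
    (∀ i, 0 < w i) ∧ (∑ i, w i ≤ 1) ∧
    (∀ i x y, 0 < φ i x → 0 < φ i y → ∀ k ∈ S, dist (T^[k] x) (T^[k] y) ≤ ε) ∧
    ∀ x, c x = ∑ i, φ i x * (-Real.log (w i))

section Codes
variable [MetricSpace X] {T : X → X} {ε : ℝ}

lemma IsCode.of_fintype {ι : Type} [Fintype ι] {S : Set ℕ} {c : X → ℝ}
    (φ : ι → X → ℝ) (w : ι → ℝ)
    (h1 : ∀ i, Continuous (φ i)) (h2 : ∀ i x, 0 ≤ φ i x) (h3 : ∀ x, ∑ i, φ i x = 1)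
    (h4 : ∀ i, 0 < w i) (h5 : ∑ i, w i ≤ 1)
    (h6 : ∀ i x y, 0 < φ i x → 0 < φ i y → ∀ k ∈ S, dist (T^[k] x) (T^[k] y) ≤ ε)
    (h7 : ∀ x, c x = ∑ i, φ i x * (-Real.log (w i))) : IsCode T ε S c := by
  classical
  let e := (Fintype.equivFin ι).symm
  refine ⟨Fintype.card ι, fun i => φ (e i), fun i => w (e i), fun i => h1 _, fun i => h2 _, ?_,
    fun i => h4 _, ?_, fun i => h6 _, ?_⟩
  · intro x; rw [← h3 x]; exact Equiv.sum_comp e (fun i => φ i x)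
  · rw [Equiv.sum_comp e w]; exact h5
  · intro x; rw [h7 x]; exact (Equiv.sum_comp e (fun i => φ i x * (-Real.log (w i)))).symm

lemma IsCode.continuous {S : Set ℕ} {c : X → ℝ} (h : IsCode T ε S c) : Continuous c := by
  obtain ⟨k, φ, w, h1, h2, h3, h4, h5, h6, h7⟩ := h
  rw [show c = fun x => ∑ i, φ i x * (-Real.log (w i)) from funext h7]
  exact continuous_finsetSum _ fun i _ => (h1 i).mul continuous_const

lemma IsCode.nonneg {S : Set ℕ} {c : X → ℝ} (h : IsCode T ε S c) (x : X) : 0 ≤ c x := by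
  obtain ⟨k, φ, w, h1, h2, h3, h4, h5, h6, h7⟩ := h
  rw [h7]
  refine Finset.sum_nonneg fun i _ => mul_nonneg (h2 i x) ?_
  have : w i ≤ 1 := le_trans
    (Finset.single_le_sum (f := w) (fun j _ => (h4 j).le) (Finset.mem_univ i)) h5
  have := Real.log_nonpos (h4 i).le this
  linarith

lemma IsCode.mono {S S' : Set ℕ} {c : X → ℝ} (h : IsCode T ε S c) (hS : S' ⊆ S) :
    IsCode T ε S' c := by
  obtain ⟨k, φ, w, h1, h2, h3, h4, h5, h6, h7⟩ := h
  exact ⟨k, φ, w, h1, h2, h3, h4, h5, fun i x y hx hy k hk => h6 i x y hx hy k (hS hk), h7⟩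

lemma IsCode.zero : IsCode T ε ∅ (fun _ => 0) :=
  ⟨1, fun _ _ => 1, fun _ => 1, fun _ => continuous_const, by simp, by simp, by simp, by simp,
    by simp, by simp⟩

lemma IsCode.mix (hT : Continuous T) {J : Type} [Fintype J] {S : Set ℕ} (α : J → X → ℝ)
    (β : J → ℝ) (c : J → X → ℝ) (l : J → ℕ) (S' : J → Set ℕ)
    (hc : ∀ j, IsCode T ε (S' j) (c j))
    (h1 : ∀ j, Continuous (α j)) (h2 : ∀ j x, 0 ≤ α j x) (h3 : ∀ x, ∑ j, α j x = 1)
    (h4 : ∀ j, 0 < β j) (h5 : ∑ j, β j ≤ 1)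
    (h6 : ∀ j x y, 0 < α j x → 0 < α j y → ∀ k ∈ S,
      dist (T^[k] x) (T^[k] y) ≤ ε ∨ ∃ k' ∈ S' j, k = k' + l j) :
    IsCode T ε S (fun x => ∑ j, α j x * (-Real.log (β j) + c j (T^[l j] x))) := by
  choose k φ w g1 g2 g3 g4 g5 g6 g7 using hc
  refine IsCode.of_fintype (ι := Σ j, Fin (k j))
    (fun p x => α p.1 x * φ p.1 p.2 (T^[l p.1] x)) (fun p => β p.1 * w p.1 p.2) ?_ ?_ ?_ ?_ ?_ ?_ ?_
  · rintro ⟨j, i⟩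
    exact (h1 j).mul ((g1 j i).comp (hT.iterate _))
  · rintro ⟨j, i⟩ x
    exact mul_nonneg (h2 j x) (g2 j i _)
  · intro x
    rw [Fintype.sum_sigma, ← h3 x]
    refine Finset.sum_congr rfl fun j _ => ?_
    simp only
    rw [← Finset.mul_sum, g3, mul_one]
  · rintro ⟨j, i⟩
    exact mul_pos (h4 j) (g4 j i)
  · rw [Fintype.sum_sigma]
    refine le_trans (Finset.sum_le_sum fun j _ => ?_) h5
    simp only
    rw [← Finset.mul_sum]
    exact mul_le_of_le_one_right (h4 j).le (g5 j)
  · rintro ⟨j, i⟩ x y hx hy m hm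
    simp only at hx hy
    have hax : 0 < α j x := lt_of_le_of_ne (h2 j x) (fun h => by rw [← h] at hx; simp at hx)
    have hay : 0 < α j y := lt_of_le_of_ne (h2 j y) (fun h => by rw [← h] at hy; simp at hy)
    rcases h6 j x y hax hay m hm with h | ⟨m', hm', rfl⟩
    · exact h
    · have := g6 j i _ _ (pos_of_mul_pos_right hx hax.le) (pos_of_mul_pos_right hy hay.le) m' hm'
      rwa [← Function.iterate_add_apply, ← Function.iterate_add_apply] at this
  · intro x
    rw [Fintype.sum_sigma]
    refine Finset.sum_congr rfl fun j _ => ?_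
    have e1 : ∀ i, α j x * φ j i (T^[l j] x) * (-Real.log (β j * w j i))
        = α j x * (-Real.log (β j)) * φ j i (T^[l j] x)
          + α j x * (φ j i (T^[l j] x) * (-Real.log (w j i))) := by
      intro i
      rw [Real.log_mul (h4 j).ne' (g4 j i).ne']; ring
    simp only [e1]
    rw [Finset.sum_add_distrib, ← Finset.mul_sum, ← Finset.mul_sum, g3, ← g7]
    ring

lemma IsCode.add (hT : Continuous T) {S S' S'' : Set ℕ} {c c' : X → ℝ} (l : ℕ)
    (h : IsCode T ε S c) (h' : IsCode T ε S' c')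
    (hS : ∀ k ∈ S'', k ∈ S ∨ ∃ k' ∈ S', k = k' + l) :
    IsCode T ε S'' (fun x => c x + c' (T^[l] x)) := by
  obtain ⟨k, φ, w, h1, h2, h3, h4, h5, h6, h7⟩ := h
  have := IsCode.mix (ε := ε) (S := S'') hT φ w (fun _ => c') (fun _ => l) (fun _ => S') (fun _ => h') h1 h2 h3 h4 h5
    (fun j x y hx hy k hk => (hS k hk).imp (fun hk' => h6 j x y hx hy k hk') id)
  convert this using 2 with x
  simp only [mul_add, Finset.sum_add_distrib]
  rw [← Finset.sum_mul, h3, h7, one_mul]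

lemma IsCode.const_mul (hT : Continuous T) {K : ℝ} (h : IsCode T ε {0} (fun _ => K)) (n : ℕ) :
    IsCode T ε (Iio n) (fun _ => n * K) := by
  induction n with
  | zero => simpa using IsCode.zero (T := T) (ε := ε)
  | succ n ih =>
    have := IsCode.add (S'' := Iio (n+1)) hT n ih h (fun k hk => by
      simp only [mem_Iio, mem_singleton_iff, exists_eq_left] at *; omega)
    convert this using 2
    push_cast; ring

lemma IsCode.sum (hT : Continuous T) {S : Set ℕ} {c : X → ℝ} (h : IsCode T ε S c) (A : Finset ℕ) :
    IsCode T ε {k | ∃ a ∈ A, ∃ k' ∈ S, k = k' + a} (fun x => ∑ a ∈ A, c (T^[a] x)) := by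
  classical
  induction A using Finset.induction_on with
  | empty => simpa using IsCode.zero (T := T) (ε := ε)
  | insert a A ha ih =>
    have := IsCode.add (S'' := {k | ∃ b ∈ insert a A, ∃ k' ∈ S, k = k' + b}) hT a ih h (by
      rintro k ⟨b, hb, k', hk', rfl⟩
      rcases Finset.mem_insert.1 hb with rfl | hb
      · exact Or.inr ⟨k', hk', rfl⟩
      · exact Or.inl ⟨b, hb, k', hk', rfl⟩)
    convert this using 2
    rw [Finset.sum_insert ha, add_comm]

/-- `r`-fold concatenation. -/
lemma IsCode.sum_mul (hT : Continuous T) {m : ℕ} (hm : 0 < m) {c : X → ℝ}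
    (h : IsCode T ε (Iio m) c) (r : ℕ) :
    IsCode T ε (Iio (r * m)) (fun x => ∑ a ∈ Finset.range r, c (T^[a * m] x)) := by
  induction r with
  | zero => simpa using IsCode.zero (T := T) (ε := ε)
  | succ r ih =>
    have := IsCode.add (S'' := Iio ((r+1)*m)) hT (r * m) ih h (by
      intro k hk
      rcases lt_or_ge k (r * m) with h | h
      · exact Or.inl h
      · refine Or.inr ⟨k - r * m, ?_, by omega⟩
        simp only [mem_Iio] at *
        rw [add_mul] at hk; omega)
    convert this using 2
    rw [Finset.sum_range_succ]

lemma IsCode.card_log_le {n : ℕ} {c : X → ℝ} (h : IsCode T ε (Iio n) c) (E : Finset X)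
    (hE : ∀ x ∈ E, ∀ y ∈ E, x ≠ y → ∃ k < n, ε < dist (T^[k] x) (T^[k] y)) :
    E.card * Real.log E.card ≤ ∑ x ∈ E, c x := by
  classical
  obtain ⟨k, φ, w, h1, h2, h3, h4, h5, h6, h7⟩ := h
  rcases E.eq_empty_or_nonempty with rfl | hne
  · simp
  have hpos : (0:ℝ) < E.card := by exact_mod_cast hne.card_pos
  have hle1 : ∀ i x, φ i x ≤ 1 := fun i x => by
    rw [← h3 x]
    exact Finset.single_le_sum (f := fun i => φ i x) (fun j _ => h2 j x) (Finset.mem_univ i)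
  have key : ∀ i, ∑ x ∈ E, φ i x ≤ 1 := by
    intro i
    by_cases hex : ∃ x ∈ E, 0 < φ i x
    · obtain ⟨x, hx, hpx⟩ := hex
      rw [Finset.sum_eq_single x]
      · exact hle1 i x
      · intro y hy hyx
        by_contra hne0
        have hpy : 0 < φ i y := lt_of_le_of_ne (h2 i y) (Ne.symm hne0)
        obtain ⟨m, hm, hlt⟩ := hE x hx y hy (Ne.symm hyx)
        exact absurd (h6 i x y hpx hpy m hm) (not_le.2 hlt)
      · exact fun h => absurd hx h
    · push Not at hex
      exact (Finset.sum_nonpos hex).trans zero_le_one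
  have hw : ∀ i, Real.log E.card + 1 - E.card * w i ≤ -Real.log (w i) := by
    intro i
    have := Real.log_le_sub_one_of_pos (mul_pos hpos (h4 i))
    rw [Real.log_mul hpos.ne' (h4 i).ne'] at this
    linarith
  have step : ∀ x, Real.log E.card + 1 - ∑ i, φ i x * (E.card * w i) ≤ c x := by
    intro x
    rw [h7]
    calc Real.log E.card + 1 - ∑ i, φ i x * (E.card * w i)
        = ∑ i, φ i x * (Real.log E.card + 1 - E.card * w i) := by
          simp only [mul_sub, Finset.sum_sub_distrib]
          rw [← Finset.sum_mul, h3, one_mul]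
      _ ≤ _ := Finset.sum_le_sum fun i _ => mul_le_mul_of_nonneg_left (hw i) (h2 i x)
  have tot : ∑ x ∈ E, ∑ i, φ i x * (E.card * w i) ≤ E.card := by
    rw [Finset.sum_comm]
    calc ∑ i, ∑ x ∈ E, φ i x * (E.card * w i) = ∑ i, (∑ x ∈ E, φ i x) * (E.card * w i) := by
          simp only [Finset.sum_mul]
      _ ≤ ∑ i, 1 * (E.card * w i) := Finset.sum_le_sum fun i _ =>
          mul_le_mul_of_nonneg_right (key i) (mul_pos hpos (h4 i)).le
      _ = E.card * ∑ i, w i := by simp [Finset.mul_sum]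
      _ ≤ E.card := mul_le_of_le_one_right hpos.le h5
  have := Finset.sum_le_sum (s := E) fun x _ => step x
  rw [Finset.sum_sub_distrib, Finset.sum_const, nsmul_eq_mul] at this
  nlinarith

lemma exists_base_pou [CompactSpace X] [Nonempty X] (hε : 0 < ε) :
    ∃ (K : ℕ) (g : Fin K → X → ℝ), 0 < K ∧ (∀ i, Continuous (g i)) ∧ (∀ i x, 0 ≤ g i x) ∧
      (∀ x, ∑ i, g i x = 1) ∧ ∀ i x y, 0 < g i x → 0 < g i y → dist x y ≤ ε := by
  obtain ⟨t, -, htf, ht⟩ := (isCompact_univ (X := X)).finite_cover_balls (half_pos hε)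
  have : Fintype t := htf.fintype
  let e := (Fintype.equivFin t).symm
  obtain ⟨f, hf⟩ := PartitionOfUnity.exists_isSubordinate (isClosed_univ (X := X))
    (fun i : Fin (Fintype.card t) => Metric.ball ((e i : t) : X) (ε / 2))
    (fun i => Metric.isOpen_ball) (by
      intro x hx
      obtain ⟨y, hy, hxy⟩ := mem_iUnion₂.1 (ht hx)
      exact mem_iUnion.2 ⟨e.symm ⟨y, hy⟩, by simpa using hxy⟩)
  have hsum : ∀ x, ∑ i, f i x = 1 := fun x => by
    rw [← finsum_eq_sum_of_fintype]; exact f.sum_eq_one (mem_univ x)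
  refine ⟨Fintype.card t, fun i x => f i x, ?_, fun i => (f i).continuous, fun i x => f.nonneg i x,
    hsum, ?_⟩
  · rw [Nat.pos_iff_ne_zero]
    intro h0
    obtain ⟨x⟩ := ‹Nonempty X›
    have := hsum x
    have : IsEmpty (Fin (Fintype.card t)) := by rw [h0]; infer_instance
    have h1 := hsum x
    rw [Finset.univ_eq_empty, Finset.sum_empty] at h1
    exact zero_ne_one h1
  · intro i x y hx hy
    have hx' := hf i (subset_tsupport _ (Function.mem_support.2 hx.ne'))
    have hy' := hf i (subset_tsupport _ (Function.mem_support.2 hy.ne'))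
    rw [Metric.mem_ball] at hx' hy'
    have := dist_triangle_right x y (e i : X)
    linarith

lemma base_code {K : ℕ} (g : Fin K → X → ℝ) (hK : 0 < K) (h1 : ∀ i, Continuous (g i))
    (h2 : ∀ i x, 0 ≤ g i x) (h3 : ∀ x, ∑ i, g i x = 1)
    (h4 : ∀ i x y, 0 < g i x → 0 < g i y → dist x y ≤ ε) :
    IsCode T ε {0} (fun _ => Real.log K) := by
  have hK' : (0:ℝ) < K := by exact_mod_cast hK
  refine ⟨K, g, fun _ => (K:ℝ)⁻¹, h1, h2, h3, fun _ => inv_pos.2 hK', ?_, ?_, ?_⟩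
  · simp [hK'.ne']
  · intro i x y hx hy k hk
    rw [mem_singleton_iff] at hk; subst hk
    simpa using h4 i x y hx hy
  · intro x
    rw [← Finset.sum_mul, h3, Real.log_inv]; ring

end Codes

section DynDist
variable [MetricSpace X] [CompactSpace X]

lemma dynDist_inner_nonneg (T : X → X) (n : ℕ) (x y : X) (k : ℕ) :
    0 ≤ ⨆ (_ : k ∈ Finset.range n), dist (T^[k] x) (T^[k] y) :=
  Real.iSup_nonneg fun _ => dist_nonneg

lemma dynDist_bdd (T : X → X) (n : ℕ) (x y : X) :
    BddAbove (range fun k : ℕ => ⨆ (_ : k ∈ Finset.range n), dist (T^[k] x) (T^[k] y)) := by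
  refine ⟨Metric.diam (univ : Set X), ?_⟩
  rintro _ ⟨k, rfl⟩
  exact Real.iSup_le (fun _ => Metric.dist_le_diam_of_mem isCompact_univ.isBounded
    (mem_univ _) (mem_univ _)) Metric.diam_nonneg

lemma dist_le_dynDist (T : X → X) {n k : ℕ} (hk : k < n) (x y : X) :
    dist (T^[k] x) (T^[k] y) ≤ dynDist T n x y := by
  refine le_trans ?_ (le_ciSup (dynDist_bdd T n x y) k)
  haveI : Nonempty (k ∈ Finset.range n) := ⟨Finset.mem_range.2 hk⟩
  rw [ciSup_const]

lemma dynDist_le (T : X → X) {n : ℕ} {x y : X} {r : ℝ} (hr : 0 ≤ r)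
    (h : ∀ k < n, dist (T^[k] x) (T^[k] y) ≤ r) : dynDist T n x y ≤ r :=
  Real.iSup_le (fun k => Real.iSup_le (fun hk => h k (Finset.mem_range.1 hk)) hr) hr

lemma dynDist_lt_iff (T : X → X) {n : ℕ} {x y : X} {r : ℝ} (hr : 0 < r) :
    dynDist T n x y < r ↔ ∀ k < n, dist (T^[k] x) (T^[k] y) < r := by
  constructor
  · exact fun h k hk => (dist_le_dynDist T hk x y).trans_lt h
  · intro h
    rcases Nat.eq_zero_or_pos n with rfl | hn
    · exact (dynDist_le T le_rfl (by simp)).trans_lt hr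
    · obtain ⟨k, hk, hmax⟩ := Finset.exists_max_image (Finset.range n)
        (fun k => dist (T^[k] x) (T^[k] y)) ⟨0, Finset.mem_range.2 hn⟩
      exact (dynDist_le T dist_nonneg fun j hj => hmax j (Finset.mem_range.2 hj)).trans_lt
        (h k (Finset.mem_range.1 hk))

lemma dynBall_eq (T : X → X) (n : ℕ) (x : X) {r : ℝ} (hr : 0 < r) :
    dynBall T n x r = ⋂ k ∈ Finset.range n, {y | dist (T^[k] x) (T^[k] y) < r} := by
  ext y
  simp [dynBall, dynDist_lt_iff T hr]

lemma isOpen_dynBall {T : X → X} (hT : Continuous T) (n : ℕ) (x : X) {r : ℝ} (hr : 0 < r) :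
    IsOpen (dynBall T n x r) := by
  rw [dynBall_eq T n x hr]
  exact isOpen_biInter_finset fun k _ =>
    isOpen_lt (continuous_const.dist (hT.iterate k)) continuous_const

lemma exists_of_lt_dynDist (T : X → X) {n : ℕ} {x y : X} {r : ℝ} (hr : 0 ≤ r)
    (h : r < dynDist T n x y) : ∃ k < n, r < dist (T^[k] x) (T^[k] y) := by
  by_contra hcon
  push Not at hcon
  exact absurd (dynDist_le T hr hcon) (not_le.2 h)

end DynDist

section Sep
variable [MetricSpace X] [CompactSpace X] [Nonempty X] {T : X → X} {ε : ℝ}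

lemma exists_base_code (T : X → X) (hε : 0 < ε) :
    ∃ L : ℝ, 0 ≤ L ∧ IsCode T ε {0} (fun _ => L) := by
  obtain ⟨K, g, hK, h1, h2, h3, h4⟩ := exists_base_pou (X := X) hε
  exact ⟨Real.log K, Real.log_natCast_nonneg K, base_code g hK h1 h2 h3 h4⟩

lemma exists_sep (hT : Continuous T) (hε : 0 < ε) (n : ℕ) :
    ∃ E : Finset X, (∀ x ∈ E, ∀ y ∈ E, x ≠ y → ε < dynDist T n x y) ∧
      E.card = sepNum T n univ ε ∧ E.Nonempty ∧
      ∀ E' : Finset X, (∀ x ∈ E', ∀ y ∈ E', x ≠ y → ε < dynDist T n x y) →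
        E'.card ≤ E.card := by
  obtain ⟨L, hL, hcode⟩ := exists_base_code T hε
  have hcode := hcode.const_mul hT n
  set A := {m | ∃ E : Finset X, ↑E ⊆ (univ : Set X) ∧
    (∀ x ∈ E, ∀ y ∈ E, x ≠ y → ε < dynDist T n x y) ∧ E.card = m} with hA
  have hbdd : BddAbove A := by
    refine ⟨⌈Real.exp (n * L)⌉₊, ?_⟩
    rintro m ⟨E, -, hE, rfl⟩
    rcases E.eq_empty_or_nonempty with rfl | hne
    · simp
    have := hcode.card_log_le E (fun x hx y hy hxy => exists_of_lt_dynDist T hε.le (hE x hx y hy hxy))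
    have hpos : (0:ℝ) < E.card := by exact_mod_cast hne.card_pos
    rw [Finset.sum_const, nsmul_eq_mul] at this
    have := le_of_mul_le_mul_left this hpos
    rw [Real.log_le_iff_le_exp hpos] at this
    exact_mod_cast this.trans (Nat.le_ceil _)
  obtain ⟨x0⟩ := ‹Nonempty X›
  have h1 : 1 ∈ A := by
    refine ⟨{x0}, subset_univ _, ?_, by simp⟩
    intro x hx y hy hxy
    simp at hx hy
    exact absurd (hx.trans hy.symm) hxy
  obtain ⟨E, -, hE, hcard⟩ := Nat.sSup_mem ⟨1, h1⟩ hbdd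
  refine ⟨E, hE, hcard, ?_, ?_⟩
  · rw [← Finset.card_pos, hcard]
    exact lt_of_lt_of_le zero_lt_one (le_csSup hbdd h1)
  · intro E' hE'
    rw [hcard]
    exact le_csSup hbdd ⟨E', subset_univ _, hE', rfl⟩

lemma exists_span (hT : Continuous T) (hε : 0 < ε) (n : ℕ) :
    ∃ E : Finset X, E.card = sepNum T n univ (ε / 2) ∧ E.Nonempty ∧
      ⋃ x ∈ E, dynBall T n x ε = univ := by
  classical
  obtain ⟨E, hE, hcard, hne, hmax⟩ := exists_sep hT (half_pos hε) n
  refine ⟨E, hcard, hne, eq_univ_of_forall fun y => ?_⟩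
  by_contra hy
  simp only [mem_iUnion, not_exists] at hy
  have hsep : ∀ x ∈ E, ε / 2 < dynDist T n x y := by
    intro x hx
    have := hy x hx
    simp only [dynBall, mem_ofPred_eq, not_lt] at this
    linarith
  have hsymm : ∀ x y, dynDist T n x y = dynDist T n y x := by
    intro x y; simp only [dynDist, dist_comm]
  have hyE : y ∉ E := fun h => by
    have := hy y h
    simp only [dynBall, mem_ofPred_eq, not_lt] at this
    have h0 : dynDist T n y y ≤ 0 := dynDist_le T le_rfl (by simp)
    linarith
  have := hmax (insert y E) (by
    intro a ha b hb hab
    rcases Finset.mem_insert.1 ha with ha' | ha' <;> rcases Finset.mem_insert.1 hb with hb' | hb'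
    · exact absurd (ha'.trans hb'.symm) hab
    · rw [ha', hsymm]; exact hsep b hb'
    · rw [hb']; exact hsep a ha'
    · exact hE a ha' b hb' hab)
  rw [Finset.card_insert_of_notMem hyE] at this
  omega

variable [MeasurableSpace X]

lemma katokNum_spec (hT : Continuous T) (hε : 0 < ε) (n : ℕ) (μ : Measure X)
    [IsProbabilityMeasure μ] {δ : ℝ} (hδ : δ ∈ Ioo (0:ℝ) 1) :
    0 < katokNum T μ n ε δ ∧ katokNum T μ n ε δ ≤ sepNum T n univ (ε / 2) ∧
    ∃ F : Finset X, ENNReal.ofReal δ < μ (⋃ x ∈ F, dynBall T n x ε) ∧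
      F.card = katokNum T μ n ε δ := by
  obtain ⟨E, hcard, hne, hE⟩ := exists_span hT hε n
  set A := {m | ∃ F : Finset X, ENNReal.ofReal δ < μ (⋃ x ∈ F, dynBall T n x ε) ∧ F.card = m}
  have hmem : sepNum T n univ (ε / 2) ∈ A := by
    refine ⟨E, ?_, hcard⟩
    rw [hE, measure_univ]
    simpa using hδ.2
  have hs := Nat.sInf_mem ⟨_, hmem⟩
  refine ⟨?_, Nat.sInf_le hmem, hs⟩
  obtain ⟨F, hF, hFc⟩ := hs
  change 0 < sInf A
  rw [← hFc, Finset.card_pos]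
  by_contra h
  rw [Finset.not_nonempty_iff_eq_empty] at h
  subst h
  simp at hF

lemma katokEntLower_le_sepEnt (hT : Continuous T) (hε : 0 < ε) (μ : Measure X)
    [IsProbabilityMeasure μ] {δ : ℝ} (hδ : δ ∈ Ioo (0:ℝ) 1) :
    katokEntLower T μ ε δ ≤ sepEnt T univ (ε / 2) := by
  refine le_trans (liminf_le_limsup) ?_
  refine limsup_le_limsup (Eventually.of_forall fun n => ?_)
  obtain ⟨h0, h1, -⟩ := katokNum_spec hT hε n μ hδ
  have h0' : (0:ℝ) < katokNum T μ n ε δ := by exact_mod_cast h0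
  have h1' : (katokNum T μ n ε δ : ℝ) ≤ sepNum T n univ (ε / 2) := by exact_mod_cast h1
  rw [EReal.coe_le_coe_iff]
  gcongr

end Sep

lemma Real.limsup_ratio (A B : ℝ → EReal) (h : ∀ ε > 0, A ε ≤ B (ε / 2)) :
    limsup (fun ε : ℝ => A ε / ((Real.log (1 / ε) : ℝ) : EReal)) (𝓝[>] (0:ℝ)) ≤
    limsup (fun ε : ℝ => B ε / ((Real.log (1 / ε) : ℝ) : EReal)) (𝓝[>] (0:ℝ)) := by
  refine EReal.le_of_forall_lt_iff_le.1 fun b hb => ?_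
  have hlog : Tendsto (fun ε : ℝ => Real.log (1 / ε)) (𝓝[>] (0:ℝ)) atTop := by
    simp only [one_div]
    exact Real.tendsto_log_atTop.comp tendsto_inv_nhdsGT_zero
  have hev := eventually_lt_of_limsup_lt hb
  have hhalf : Tendsto (fun ε : ℝ => ε / 2) (𝓝[>] (0:ℝ)) (𝓝[>] (0:ℝ)) := by
    refine tendsto_nhdsWithin_iff.2 ⟨?_, ?_⟩
    · have : Tendsto (fun ε : ℝ => ε / 2) (𝓝 0) (𝓝 (0 / 2)) := tendsto_id.div_const 2
      rw [zero_div] at this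
      exact this.mono_left nhdsWithin_le_nhds
    · filter_upwards [self_mem_nhdsWithin] with x hx
      exact half_pos (mem_Ioi.1 hx)
  have hbound : ∀ᶠ ε in 𝓝[>] (0:ℝ), A ε / ((Real.log (1 / ε) : ℝ) : EReal) ≤
      ((b * ((Real.log 2 + Real.log (1 / ε)) / Real.log (1 / ε)) : ℝ) : EReal) := by
    filter_upwards [self_mem_nhdsWithin, hhalf.eventually hev, hlog.eventually_gt_atTop 0,
      hhalf.eventually (hlog.eventually_gt_atTop 0)] with ε hε h1 h2 h3
    have hε : 0 < ε := hε
    have e2 : Real.log (1 / (ε / 2)) = Real.log 2 + Real.log (1 / ε) := by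
      rw [← Real.log_mul (by norm_num) (by positivity)]
      congr 1; field_simp
    have h1' : B (ε / 2) ≤ ((Real.log (1 / (ε / 2)) : ℝ) : EReal) * (b : EReal) :=
      (EReal.div_le_iff_le_mul (by exact_mod_cast h3) (EReal.coe_ne_top _)).1 h1.le
    rw [EReal.div_le_iff_le_mul (by exact_mod_cast h2) (EReal.coe_ne_top _)]
    refine (h ε hε).trans (h1'.trans ?_)
    rw [e2, ← EReal.coe_mul, ← EReal.coe_mul, EReal.coe_le_coe_iff]
    apply le_of_eq
    field_simp
  have hlim : Tendsto (fun ε : ℝ => ((b * ((Real.log 2 + Real.log (1 / ε)) / Real.log (1 / ε)) : ℝ)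
      : EReal)) (𝓝[>] (0:ℝ)) (𝓝 ((b : ℝ) : EReal)) := by
    refine (continuous_coe_real_ereal.tendsto _).comp ?_
    have : Tendsto (fun ε : ℝ => b * (Real.log 2 / Real.log (1 / ε) + 1)) (𝓝[>] (0:ℝ))
        (𝓝 (b * (0 + 1))) :=
      ((hlog.const_div_atTop _).add_const 1).const_mul b
    rw [zero_add, mul_one] at this
    refine this.congr' ?_
    filter_upwards [hlog.eventually_gt_atTop 0] with ε h2
    field_simp
  exact (limsup_le_limsup hbound).trans hlim.limsup_eq.le

section Misiurewicz
variable [MetricSpace X] [CompactSpace X] [Nonempty X] [MeasurableSpace X] [BorelSpace X]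
  {T : X → X} {ε : ℝ}

lemma cont_integrable (μ : Measure X) [IsFiniteMeasure μ] {g : X → ℝ} (hg : Continuous g) :
    Integrable g μ :=
  (BoundedContinuousFunction.mkOfCompact ⟨g, hg⟩).integrable μ

lemma tendsto_integral_cont {γ : Type*} {F : Filter γ} {μs : γ → ProbabilityMeasure X}
    {μ : ProbabilityMeasure X} (h : Tendsto μs F (𝓝 μ)) {g : X → ℝ} (hg : Continuous g) :
    Tendsto (fun i => ∫ x, g x ∂(μs i : Measure X)) F (𝓝 (∫ x, g x ∂(μ : Measure X))) :=
  ProbabilityMeasure.tendsto_iff_forall_integral_tendsto.1 h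
    (BoundedContinuousFunction.mkOfCompact ⟨g, hg⟩)

lemma exists_empirical {ι : Type*} [Fintype ι] [Nonempty ι] (y : ι → X) :
    ∃ μ : ProbabilityMeasure X, ∀ g : X → ℝ, Continuous g →
      ∫ x, g x ∂(μ : Measure X) = (∑ i, g (y i)) / Fintype.card ι := by
  let μ : Measure X := (Fintype.card ι : ENNReal)⁻¹ • ∑ i, Measure.dirac (y i)
  have hμ : IsProbabilityMeasure μ := by
    constructor
    simp only [μ, Measure.smul_apply, Measure.finsetSum_apply, measure_univ, smul_eq_mul]
    simp only [Finset.sum_const, Finset.card_univ, nsmul_eq_mul, mul_one]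
    exact ENNReal.inv_mul_cancel (by simp) (by simp)
  refine ⟨⟨μ, hμ⟩, fun g hg => ?_⟩
  simp only [ProbabilityMeasure.coe_mk, μ]
  rw [integral_smul_measure, integral_finsetSum_measure]
  · simp only [integral_dirac, smul_eq_mul]
    rw [div_eq_inv_mul]; simp
  · exact fun i _ => cont_integrable _ hg

lemma block_ineq (hT : Continuous T) {L : ℝ} (hL : IsCode T ε {0} (fun _ => L)) {m n : ℕ}
    (hm : 0 < m) {c : X → ℝ} (hc : IsCode T ε (Iio m) c) (E : Finset X)
    (hE : ∀ x ∈ E, ∀ y ∈ E, x ≠ y → ∃ k < n, ε < dist (T^[k] x) (T^[k] y)) :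
    m * (E.card * Real.log E.card) ≤
      m * (E.card * (m * L)) + ∑ k ∈ Finset.range n, ∑ x ∈ E, c (T^[k] x) := by
  have hj : ∀ j ∈ Finset.range m, E.card * Real.log E.card ≤ E.card * (m * L) +
      ∑ k ∈ Finset.range n with k % m = j, ∑ x ∈ E, c (T^[k] x) := by
    intro j hj
    have hj := Finset.mem_range.1 hj
    have h1 := IsCode.add (S'' := Iio n) hT 0 (hL.const_mul hT m)
      (hc.sum hT {k ∈ Finset.range n | k % m = j}) (by
        intro p hp
        rcases lt_or_ge p m with h | h
        · exact Or.inl h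
        · right
          have hr : (p + m - j) % m < m := Nat.mod_lt _ hm
          refine ⟨p, ⟨p - (p + m - j) % m, ?_, (p + m - j) % m, hr, by omega⟩, rfl⟩
          simp only [Finset.mem_filter, Finset.mem_range]
          refine ⟨lt_of_le_of_lt (Nat.sub_le _ _) hp, ?_⟩
          have h2 := Nat.div_add_mod (p + m - j) m
          set q := (p + m - j) / m with hq
          set r := (p + m - j) % m
          have hq1 : 0 < q := Nat.div_pos (by omega) hm
          have : p - r = j + m * (q - 1) := by
            obtain ⟨q', hq'⟩ : ∃ q', q = q' + 1 := ⟨q - 1, by omega⟩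
            rw [hq', mul_add, mul_one] at h2
            rw [hq', Nat.add_sub_cancel]
            omega
          rw [this, Nat.add_mul_mod_self_left, Nat.mod_eq_of_lt hj])
    have h2 := h1.card_log_le E hE
    refine h2.trans (le_of_eq ?_)
    simp only [Function.iterate_zero, id]
    rw [Finset.sum_add_distrib, Finset.sum_const, nsmul_eq_mul, Finset.sum_comm]
  have := Finset.sum_le_sum hj
  rw [Finset.sum_add_distrib, Finset.sum_const, Finset.sum_const, Finset.card_range,
    nsmul_eq_mul, nsmul_eq_mul] at this
  rwa [Finset.sum_fiberwise_of_maps_to (fun k _ => Finset.mem_range.2 (Nat.mod_lt k hm))] at this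

lemma exists_invariant (hT : Continuous T) (hε : 0 < ε) {s : ℝ} (hs : (s : EReal) < sepEnt T univ ε) :
    ∃ μ : ProbabilityMeasure X, MeasurePreserving T (μ : Measure X) (μ : Measure X) ∧
      ∀ m : ℕ, 0 < m → ∀ c, IsCode T ε (Iio m) c → m * s ≤ ∫ x, c x ∂(μ : Measure X) := by
  obtain ⟨L, hL, hcode⟩ := exists_base_code T hε
  choose E hsep hcard hne _ using fun n => exists_sep hT hε n
  have hemp : ∀ n : ℕ, ∃ μ : ProbabilityMeasure X, 0 < n → ∀ g : X → ℝ, Continuous g →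
      ∫ x, g x ∂(μ : Measure X) =
        (∑ k ∈ Finset.range n, ∑ x ∈ E n, g (T^[k] x)) / (n * (E n).card) := by
    intro n
    rcases Nat.eq_zero_or_pos n with rfl | hn
    · obtain ⟨μ, -⟩ := exists_empirical (ι := Unit) (fun _ => Classical.arbitrary X)
      exact ⟨μ, fun h => absurd h (lt_irrefl _)⟩
    · have : Nonempty (Fin n) := ⟨⟨0, hn⟩⟩
      have : Nonempty (E n) := (hne n).to_subtype
      obtain ⟨μ, hμ⟩ := exists_empirical (ι := Fin n × E n) (fun p => T^[p.1] p.2)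
      refine ⟨μ, fun _ g hg => ?_⟩
      rw [hμ g hg, Fintype.sum_prod_type, Finset.sum_range]
      simp only [Fintype.card_prod, Fintype.card_fin, Fintype.card_coe, Nat.cast_mul]
      congr 1
      refine Finset.sum_congr rfl fun i _ => ?_
      exact Finset.sum_coe_sort (E n) (fun x => g (T^[i] x))
  choose μs hμs using hemp
  have hfreq : ∃ᶠ n in atTop, s < Real.log (sepNum T n univ ε) / n := by
    have := frequently_lt_of_lt_limsup (by isBoundedDefault) hs
    simpa only [EReal.coe_lt_coe_iff] using this
  have hfreq := hfreq.and_eventually (eventually_gt_atTop 0)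
  set l : Filter ℕ := atTop ⊓ 𝓟 {n | s < Real.log (sepNum T n univ ε) / n ∧ 0 < n} with hl
  have hNe : l.NeBot := frequently_iff_neBot.1 hfreq
  let u := Ultrafilter.of l
  have hul : (u : Filter ℕ) ≤ l := Ultrafilter.of_le l
  have hgood : ∀ᶠ n in (u : Filter ℕ), s < Real.log (sepNum T n univ ε) / n ∧ 0 < n :=
    hul (mem_inf_of_right (mem_principal_self _))
  have hutop : Tendsto (fun n : ℕ => (n : ℝ)) u atTop :=
    tendsto_natCast_atTop_atTop.mono_left (hul.trans inf_le_left)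
  obtain ⟨μ, -, hμ⟩ := isCompact_univ.ultrafilter_le_nhds (u.map μs) (by simp)
  have hμ : Tendsto μs u (𝓝 μ) := hμ
  have hpos : ∀ n, (0:ℝ) < (E n).card := fun n => by exact_mod_cast (hne n).card_pos
  refine ⟨μ, ?_, ?_⟩
  · have hmeas : Measurable T := hT.measurable
    refine ⟨hmeas, ?_⟩
    have : IsProbabilityMeasure (Measure.map T (μ : Measure X)) :=
      Measure.isProbabilityMeasure_map hmeas.aemeasurable
    apply ext_of_forall_integral_eq_of_IsFiniteMeasure
    intro g
    rw [integral_map hmeas.aemeasurable g.continuous.aestronglyMeasurable]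
    have t1 := tendsto_integral_cont hμ (g.continuous.comp hT)
    have t2 := tendsto_integral_cont hμ g.continuous
    have t3 := t1.sub t2
    have t4 : Tendsto (fun n => ∫ x, (g ∘ T) x ∂(μs n : Measure X) - ∫ x, g x ∂(μs n : Measure X)) u
        (𝓝 0) := by
      refine squeeze_zero_norm' (a := fun n : ℕ => 2 * ‖g‖ / (n : ℝ)) ?_ (hutop.const_div_atTop _)
      filter_upwards [hgood] with n hn
      rw [hμs n hn.2 _ (g.continuous.comp hT), hμs n hn.2 _ g.continuous, ← sub_div,
        ← Finset.sum_sub_distrib]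
      have e1 : ∑ k ∈ Finset.range n, (∑ x ∈ E n, (g ∘ T) (T^[k] x) - ∑ x ∈ E n, g (T^[k] x))
          = ∑ x ∈ E n, (g (T^[n] x) - g x) := by
        rw [Finset.sum_sub_distrib]
        have : ∀ k x, (g ∘ T) (T^[k] x) = g (T^[k+1] x) := fun k x => by
          rw [Function.iterate_succ_apply']; rfl
        simp only [this]
        rw [← Finset.sum_sub_distrib, Finset.sum_range_sub (fun k => ∑ x ∈ E n, g (T^[k] x)),
          Finset.sum_sub_distrib]
        simp
      rw [e1, norm_div]
      have hn' : (0:ℝ) < n := by exact_mod_cast hn.2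
      have e2 : ‖∑ x ∈ E n, (g (T^[n] x) - g x)‖ ≤ (E n).card * (2 * ‖g‖) := by
        refine (norm_sum_le _ _).trans ?_
        rw [← nsmul_eq_mul]
        refine Finset.sum_le_card_nsmul _ _ _ fun x _ => ?_
        have := norm_sub_le (g (T^[n] x)) (g x)
        have := g.norm_coe_le_norm (T^[n] x)
        have := g.norm_coe_le_norm x
        linarith
      rw [Real.norm_of_nonneg (mul_pos hn' (hpos n)).le]
      rw [div_le_div_iff₀ (mul_pos hn' (hpos n)) hn']
      nlinarith
    have := tendsto_nhds_unique t3 t4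
    have h5 : ∫ x, (g ∘ T) x ∂(μ : Measure X) = ∫ x, g x ∂(μ : Measure X) := sub_eq_zero.1 this
    exact h5
  · intro m hm c hc
    have t1 := tendsto_integral_cont hμ hc.continuous
    have t2 : Tendsto (fun n : ℕ => m * s - (m * (m * L)) / (n : ℝ)) u (𝓝 (m * s - 0)) :=
      tendsto_const_nhds.sub (hutop.const_div_atTop _)
    rw [sub_zero] at t2
    refine le_of_tendsto_of_tendsto t2 t1 ?_
    filter_upwards [hgood] with n hn
    have hn' : (0:ℝ) < n := by exact_mod_cast hn.2
    rw [hμs n hn.2 _ hc.continuous]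
    have h1 := block_ineq (n := n) hT hcode hm hc (E n)
      (fun x hx y hy hxy => exists_of_lt_dynDist T hε.le (hsep n x hx y hy hxy))
    have h2 := hn.1
    rw [← hcard n, lt_div_iff₀ hn'] at h2
    rw [le_div_iff₀ (mul_pos hn' (hpos n))]
    have h3 : (m * s - m * (m * L) / n) * (n * (E n).card) =
        (E n).card * m * (s * n) - m * ((E n).card * (m * L)) := by
      field_simp
    rw [h3]
    have hm' : (0:ℝ) < m := by exact_mod_cast hm
    have h4 := mul_le_mul_of_nonneg_left h2.le (mul_pos (hpos n) hm').le
    linarith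

end Misiurewicz

section Extreme
variable [MetricSpace X] [CompactSpace X] [Nonempty X] [MeasurableSpace X] [BorelSpace X]
  {T : X → X} {ε : ℝ}

lemma IsCode.merge (hT : Continuous T) {S : Set ℕ} {c₁ c₂ χ : X → ℝ} (h₁ : IsCode T ε S c₁)
    (h₂ : IsCode T ε S c₂) (hχ : Continuous χ) (h0 : ∀ x, 0 ≤ χ x) (h1 : ∀ x, χ x ≤ 1) :
    IsCode T ε S (fun x => Real.log 2 + χ x * c₁ x + (1 - χ x) * c₂ x) := by
  have := IsCode.mix (ε := ε) (S := S) (J := Bool) hT (fun b x => if b then χ x else 1 - χ x)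
    (fun _ => 1 / 2) (fun b => if b then c₁ else c₂) (fun _ => 0) (fun _ => S)
    (by rintro (_ | _) <;> simpa) (by
      rintro (_ | _)
      · have : Continuous fun x => 1 - χ x := continuous_const.sub hχ
        simpa using this
      · simpa using hχ) (by
      rintro (_ | _) x
      · simpa using h1 x
      · simpa using h0 x) (by simp) (by norm_num) (by norm_num) (by
        intro j x y _ _ k hk; exact Or.inr ⟨k, hk, rfl⟩)
  convert this using 2 with x
  simp
  ring

lemma merge_integral (hT : Continuous T) (μ : Measure X) [IsProbabilityMeasure μ] {A : Set X}
    (hA : MeasurableSet A) {S : Set ℕ} {c₁ c₂ : X → ℝ} (h₁ : IsCode T ε S c₁)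
    (h₂ : IsCode T ε S c₂) :
    ∃ c, IsCode T ε S c ∧
      ∫ x, c x ∂μ ≤ Real.log 2 + 1 + ∫ x in A, c₁ x ∂μ + ∫ x in Aᶜ, c₂ x ∂μ := by
  obtain ⟨M, hM⟩ : ∃ M : ℝ, ∀ x, c₁ x + c₂ x ≤ M := by
    obtain ⟨x, -, hx⟩ := isCompact_univ.exists_isMaxOn (univ_nonempty (α := X))
      (h₁.continuous.add h₂.continuous).continuousOn
    exact ⟨_, fun y => hx (mem_univ y)⟩
  have hM0 : 0 ≤ M := (add_nonneg (h₁.nonneg (Classical.arbitrary X)) (h₂.nonneg _)).trans (hM _)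
  have hind : Integrable (A.indicator (fun _ => (1:ℝ))) μ :=
    (integrable_const 1).indicator hA
  obtain ⟨g, hg, -⟩ := hind.exists_boundedContinuous_integral_sub_le
    (ε := 1 / (M + 1)) (by positivity)
  let χ : X → ℝ := fun x => max 0 (min 1 (g x))
  have hχc : Continuous χ := continuous_const.max (continuous_const.min g.continuous)
  have hχ0 : ∀ x, 0 ≤ χ x := fun x => le_max_left _ _
  have hχ1 : ∀ x, χ x ≤ 1 := fun x => max_le zero_le_one (min_le_left _ _)
  have hχg : ∀ x, |χ x - A.indicator (fun _ => (1:ℝ)) x| ≤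
      ‖A.indicator (fun _ => (1:ℝ)) x - g x‖ := by
    intro x
    rw [Real.norm_eq_abs]
    by_cases hx : x ∈ A
    · simp only [hx, indicator_of_mem]
      rw [abs_le]
      have := abs_nonneg (1 - g x)
      have := le_abs_self (1 - g x)
      refine ⟨?_, ?_⟩
      · rcases le_total 1 (g x) with h | h
        · have : χ x = 1 := by simp [χ, h]
          linarith
        · have : g x ≤ χ x := by
            simp only [χ, min_eq_right h]; exact le_max_right _ _
          linarith
      · linarith [hχ1 x]
    · simp only [hx, not_false_eq_true, indicator_of_notMem, sub_zero, zero_sub, abs_neg]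
      rw [abs_of_nonneg (hχ0 x)]
      exact max_le (abs_nonneg _) ((min_le_right _ _).trans (le_abs_self _))
  refine ⟨_, h₁.merge hT h₂ hχc hχ0 hχ1, ?_⟩
  have i1 := cont_integrable μ h₁.continuous
  have i2 := cont_integrable μ h₂.continuous
  have ptw : ∀ x, Real.log 2 + χ x * c₁ x + (1 - χ x) * c₂ x ≤
      Real.log 2 + (A.indicator c₁ x + Aᶜ.indicator c₂ x) +
        M * ‖A.indicator (fun _ => (1:ℝ)) x - g x‖ := by
    intro x
    have hb := (hχg x)
    have hb2 := mul_le_mul_of_nonneg_left hb hM0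
    have p1 := h₁.nonneg x
    have p2 := h₂.nonneg x
    have p3 := hM x
    have hm : |χ x - A.indicator (fun _ => (1:ℝ)) x| * (c₁ x + c₂ x) ≤
       M * |χ x - A.indicator (fun _ => (1:ℝ)) x| := by
      rw [mul_comm]; exact mul_le_mul_of_nonneg_right p3 (abs_nonneg _)
    by_cases hx : x ∈ A
    · simp only [hx, indicator_of_mem, mem_compl_iff, not_true_eq_false, not_false_eq_true,
        indicator_of_notMem] at *
      rw [abs_of_nonpos (by linarith [hχ1 x])] at *
      nlinarith [hχ1 x, hχ0 x]
    · simp only [hx, indicator_of_mem, mem_compl_iff, not_false_eq_true,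
        indicator_of_notMem, sub_zero] at *
      rw [abs_of_nonneg (hχ0 x)] at *
      nlinarith [hχ1 x, hχ0 x]
  have ig : Integrable (fun x => ‖A.indicator (fun _ => (1:ℝ)) x - g x‖) μ :=
    (hind.sub (g.integrable μ)).norm
  have j1 := i1.indicator hA
  have j2 := i2.indicator hA.compl
  have k1 : Integrable (fun x => A.indicator c₁ x + Aᶜ.indicator c₂ x) μ := j1.add j2
  have k2 : Integrable (fun x => Real.log 2 + (A.indicator c₁ x + Aᶜ.indicator c₂ x)) μ :=
    (integrable_const _).add k1
  calc ∫ x, (Real.log 2 + χ x * c₁ x + (1 - χ x) * c₂ x) ∂μ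
      ≤ ∫ x, (Real.log 2 + (A.indicator c₁ x + Aᶜ.indicator c₂ x) +
        M * ‖A.indicator (fun _ => (1:ℝ)) x - g x‖) ∂μ :=
        integral_mono (cont_integrable μ (h₁.merge hT h₂ hχc hχ0 hχ1).continuous)
          (((integrable_const _).add (j1.add j2)).add (ig.const_mul M)) ptw
    _ = Real.log 2 + (∫ x in A, c₁ x ∂μ + ∫ x in Aᶜ, c₂ x ∂μ) +
        M * ∫ x, ‖A.indicator (fun _ => (1:ℝ)) x - g x‖ ∂μ := by
        rw [integral_add k2 (ig.const_mul M),
          integral_add (integrable_const _) k1, integral_add j1 j2,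
          integral_indicator hA, integral_indicator hA.compl, integral_const_mul]
        simp
    _ ≤ _ := by
        have : M * ∫ x, ‖A.indicator (fun _ => (1:ℝ)) x - g x‖ ∂μ ≤ M * (1 / (M + 1)) :=
          mul_le_mul_of_nonneg_left hg hM0
        have : M * (1 / (M + 1)) ≤ 1 := by
          rw [mul_one_div, div_le_one (by linarith)]; linarith
        linarith

lemma integral_sum_iterate (ν : Measure X) [IsFiniteMeasure ν] (hν : MeasurePreserving T ν ν)
    (hT : Continuous T) {c : X → ℝ} (hc : Continuous c) (A : Finset ℕ) (f : ℕ → ℕ) :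
    ∫ x, ∑ a ∈ A, c (T^[f a] x) ∂ν = A.card * ∫ x, c x ∂ν := by
  have hi : ∀ a ∈ A, Integrable (fun x => c (T^[f a] x)) ν :=
    fun a _ => cont_integrable ν (hc.comp (hT.iterate _))
  rw [integral_finsetSum _ hi, ← nsmul_eq_mul,
    ← Finset.sum_const]
  refine Finset.sum_congr rfl fun a _ => ?_
  have h := hν.iterate (f a)
  conv_rhs => rw [← h.map_eq]
  rw [integral_map h.aemeasurable hc.aestronglyMeasurable]

lemma split_mem (hT : Continuous T) (μ : Measure X) [IsProbabilityMeasure μ]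
    (hμ : MeasurePreserving T μ μ) {A : Set X} (hA : MeasurableSet A) (hTA : T ⁻¹' A = A)
    {s : ℝ} (h1 : ∀ m : ℕ, 0 < m → ∀ c, IsCode T ε (Iio m) c → m * s ≤ ∫ x, c x ∂μ)
    (h2 : ∀ θ > 0, ∃ m : ℕ, 0 < m ∧ ∃ c, IsCode T ε (Iio m) c ∧
      ∫ x in Aᶜ, c x ∂μ < m * (s + θ) * μ.real Aᶜ)
    (m : ℕ) (hm : 0 < m) (c : X → ℝ) (hc : IsCode T ε (Iio m) c) :
    m * s * μ.real A ≤ ∫ x in A, c x ∂μ := by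
  by_contra hcon
  push Not at hcon
  set α := m * s * μ.real A - ∫ x in A, c x ∂μ with hα
  have hα0 : 0 < α := by linarith
  have hm' : (0:ℝ) < m := by exact_mod_cast hm
  obtain ⟨m₂, hm₂, c₂, hc₂, hlt⟩ := h2 (α / (2 * m)) (by positivity)
  have hm₂' : (0:ℝ) < m₂ := by exact_mod_cast hm₂
  obtain ⟨r, hr⟩ := exists_nat_gt ((Real.log 2 + 1) / (m₂ * α / 2))
  rw [div_lt_iff₀ (by positivity)] at hr
  have hr0 : (0:ℝ) < r := by
    by_contra h
    have : (r:ℝ) = 0 := le_antisymm (not_lt.1 h) (Nat.cast_nonneg r)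
    rw [this, zero_mul] at hr
    have := Real.log_pos (show (1:ℝ) < 2 by norm_num)
    linarith
  have hr1 : 0 < r := by exact_mod_cast hr0
  have C1 := hc.sum_mul hT hm (r * m₂)
  have C2 := hc₂.sum_mul hT hm₂ (r * m)
  have e : r * m * m₂ = r * m₂ * m := by ring
  rw [e] at C2
  have pA : MeasurePreserving T (μ.restrict A) (μ.restrict A) := by
    have := hμ.restrict_preimage hA
    rwa [hTA] at this
  have pA' : MeasurePreserving T (μ.restrict Aᶜ) (μ.restrict Aᶜ) := by
    have := hμ.restrict_preimage hA.compl
    rwa [preimage_compl, hTA] at this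
  obtain ⟨C, hC, hle⟩ := merge_integral hT μ hA C1 C2
  rw [integral_sum_iterate _ pA hT hc.continuous _ (fun a => a * m),
    integral_sum_iterate _ pA' hT hc₂.continuous _ (fun a => a * m₂)] at hle
  have hge := h1 _ (by positivity) C hC
  have hsum : μ.real A + μ.real Aᶜ = 1 := by rw [measureReal_add_measureReal_compl hA]; simp
  have hc0 : 0 ≤ μ.real A := measureReal_nonneg
  simp only [Finset.card_range] at hle
  push_cast at hle hge
  have h3 := mul_lt_mul_of_pos_left hlt (mul_pos hr0 hm')
  have e1 : ∫ x in A, c x ∂μ = m * s * μ.real A - α := by linarith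
  rw [e1] at hle
  have e2 : μ.real Aᶜ = 1 - μ.real A := by linarith
  rw [e2] at h3
  have e3 : r * m * (m₂ * (s + α / (2 * m)) * (1 - μ.real A)) =
    r * m * m₂ * s * (1 - μ.real A) + r * m₂ * α / 2 * (1 - μ.real A) := by
    field_simp
  rw [e3] at h3
  have h4 : 0 ≤ r * m₂ * α / 2 * μ.real A := by positivity
  nlinarith

variable (T ε) in
/-- Invariant measures of entropy at least `s` at scale `ε`. -/
def bigMeas (s : ℝ) : Set (ProbabilityMeasure X) :=
  {μ | MeasurePreserving T (μ : Measure X) (μ : Measure X) ∧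
    ∀ m : ℕ, 0 < m → ∀ c, IsCode T ε (Iio m) c → m * s ≤ ∫ x, c x ∂(μ : Measure X)}

lemma isClosed_bigMeas (hT : Continuous T) (s : ℝ) : IsClosed (bigMeas T ε s) := by
  have hcont : ∀ g : X → ℝ, Continuous g →
      Continuous fun μ : ProbabilityMeasure X => ∫ x, g x ∂(μ : Measure X) := fun g hg =>
    continuous_iff_continuousAt.2 fun μ => tendsto_integral_cont tendsto_id hg
  have : bigMeas T ε s = (⋂ g : BoundedContinuousFunction X ℝ, {μ : ProbabilityMeasure X |
      ∫ x, (g ∘ T) x ∂(μ : Measure X) = ∫ x, g x ∂(μ : Measure X)}) ∩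
      ⋂ (m : ℕ) (_ : 0 < m) (c : X → ℝ) (_ : IsCode T ε (Iio m) c),
        {μ : ProbabilityMeasure X | m * s ≤ ∫ x, c x ∂(μ : Measure X)} := by
    ext μ
    simp only [bigMeas, mem_ofPred_eq, mem_inter_iff, mem_iInter]
    refine and_congr_left fun _ => ⟨fun h g => ?_, fun h => ⟨hT.measurable, ?_⟩⟩
    · conv_rhs => rw [← h.map_eq]
      rw [integral_map h.aemeasurable g.continuous.aestronglyMeasurable]
      rfl
    · have : IsProbabilityMeasure (Measure.map T (μ : Measure X)) :=
        Measure.isProbabilityMeasure_map hT.measurable.aemeasurable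
      apply ext_of_forall_integral_eq_of_IsFiniteMeasure
      intro g
      rw [integral_map hT.measurable.aemeasurable g.continuous.aestronglyMeasurable]
      exact h g
  rw [this]
  refine IsClosed.inter (isClosed_iInter fun g => isClosed_eq (hcont _ (g.continuous.comp hT))
    (hcont _ g.continuous)) ?_
  exact isClosed_iInter fun m => isClosed_iInter fun _ => isClosed_iInter fun c =>
    isClosed_iInter fun hc => isClosed_le continuous_const (hcont _ hc.continuous)

lemma exists_max (hT : Continuous T) (hε : 0 < ε) :
    ∃ s : ℝ, sepEnt T univ ε ≤ s ∧ (bigMeas T ε s : Set (ProbabilityMeasure X)).Nonempty ∧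
      ∀ s' > s, ¬ (bigMeas T ε s' : Set (ProbabilityMeasure X)).Nonempty := by
  set A : Set ℝ := {s | (bigMeas T ε s : Set (ProbabilityMeasure X)).Nonempty} with hAdef
  have hsub : ∀ s : ℝ, (s : EReal) < sepEnt T univ ε → s ∈ A := fun s hs => exists_invariant hT hε hs
  have hne : A.Nonempty := by
    refine ⟨-1, hsub _ ?_⟩
    refine lt_of_lt_of_le (b := ((0:ℝ) : EReal)) (by exact_mod_cast neg_one_lt_zero) ?_
    refine le_limsup_of_frequently_le (Frequently.of_forall fun n => ?_) (by isBoundedDefault)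
    rw [EReal.coe_le_coe_iff]
    have := Real.log_natCast_nonneg (sepNum T n univ ε)
    positivity
  obtain ⟨L, hL, hcode⟩ := exists_base_code T hε
  have hbdd : BddAbove A := by
    refine ⟨L, ?_⟩
    rintro s ⟨μ, hμ⟩
    have := hμ.2 1 one_pos (fun _ => L) (by
      have := hcode.const_mul hT 1
      simpa using this)
    simpa using this
  refine ⟨sSup A, ?_, ?_, ?_⟩
  · refine EReal.ge_of_forall_gt_iff_ge.1 fun z hz => ?_
    rw [EReal.coe_le_coe_iff]
    exact le_csSup hbdd (hsub z hz)
  · have hmono : ∀ s s', s ≤ s' → (bigMeas T ε s' : Set (ProbabilityMeasure X)) ⊆ bigMeas T ε s := by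
      intro s s' h μ hμ
      refine ⟨hμ.1, fun m hm c hc => le_trans ?_ (hμ.2 m hm c hc)⟩
      gcongr
    have : (⋂ k : ℕ, (bigMeas T ε (sSup A - 1 / ((k:ℝ) + 1)) : Set (ProbabilityMeasure X))).Nonempty := by
      refine IsCompact.nonempty_iInter_of_sequence_nonempty_isCompact_isClosed _ ?_ ?_ ?_ ?_
      · intro k
        apply hmono
        have : 1 / (((k + 1 : ℕ) : ℝ) + 1) ≤ 1 / ((k:ℝ) + 1) := by
          apply one_div_le_one_div_of_le (by positivity)
          push_cast; linarith
        linarith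
      · intro k
        obtain ⟨s, hs, hlt⟩ := exists_lt_of_lt_csSup hne
          (show sSup A - 1 / ((k:ℝ) + 1) < sSup A by
            have : 0 < 1 / ((k:ℝ) + 1) := by positivity
            linarith)
        exact hs.mono (hmono _ _ hlt.le)
      · exact (isClosed_bigMeas hT _).isCompact
      · exact fun k => isClosed_bigMeas hT _
    obtain ⟨μ, hμ⟩ := this
    rw [mem_iInter] at hμ
    refine ⟨μ, (hμ 0).1, fun m hm c hc => ?_⟩
    have t : Tendsto (fun k : ℕ => m * (sSup A - 1 / ((k:ℝ) + 1))) atTop (𝓝 (m * (sSup A - 0))) :=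
      (tendsto_const_nhds.sub tendsto_one_div_add_atTop_nhds_zero_nat).const_mul _
    rw [sub_zero] at t
    exact le_of_tendsto' t fun k => (hμ k).2 m hm c hc
  · intro s' hs' hn
    exact absurd (le_csSup hbdd (show s' ∈ A from hn)) (not_le.2 hs')

lemma cond_facts (μ : Measure X) [IsProbabilityMeasure μ]
    (hμ : MeasurePreserving T μ μ) {A : Set X} (hA : MeasurableSet A) (hTA : T ⁻¹' A = A)
    (h0 : μ A ≠ 0) : ∃ ν : ProbabilityMeasure X,
      MeasurePreserving T (ν : Measure X) (ν : Measure X) ∧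
      (∀ g : X → ℝ, ∫ x, g x ∂(ν : Measure X) = (μ.real A)⁻¹ * ∫ x in A, g x ∂μ) ∧
      (ν : Measure X) Aᶜ = 0 := by
  have hp := ProbabilityTheory.cond_isProbabilityMeasure h0
  refine ⟨⟨ProbabilityTheory.cond μ A, hp⟩, ?_, ?_, ?_⟩
  · simp only [ProbabilityMeasure.coe_mk, ProbabilityTheory.cond]
    have := hμ.restrict_preimage hA
    rw [hTA] at this
    exact this.smul_measure _
  · intro g
    simp only [ProbabilityMeasure.coe_mk, ProbabilityTheory.cond]
    rw [integral_smul_measure, smul_eq_mul, ENNReal.toReal_inv]; rfl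
  · simp only [ProbabilityMeasure.coe_mk, ProbabilityTheory.cond]
    simp [Measure.restrict_apply hA.compl]

lemma exists_ergodic (hT : Continuous T) (hε : 0 < ε) :
    ∃ s : ℝ, sepEnt T univ ε ≤ s ∧ ∃ μ : Measure X, IsProbabilityMeasure μ ∧ Ergodic T μ ∧
      ∀ m : ℕ, 0 < m → ∀ c, IsCode T ε (Iio m) c → m * s ≤ ∫ x, c x ∂μ := by
  obtain ⟨s, hs, hne, hmax⟩ := exists_max (X := X) hT hε
  refine ⟨s, hs, ?_⟩
  let Φ : ProbabilityMeasure X → (C(X, ℝ) → ℝ) := fun μ f => ∫ x, f x ∂(μ : Measure X)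
  have hΦ : Continuous Φ := continuous_pi fun f =>
    continuous_iff_continuousAt.2 fun μ => tendsto_integral_cont tendsto_id f.continuous
  have hcomp : IsCompact (Φ '' bigMeas T ε s) := ((isClosed_bigMeas hT s).isCompact).image hΦ
  obtain ⟨e, he⟩ := hcomp.extremePoints_nonempty (hne.image Φ)
  obtain ⟨⟨μ, hμ, rfl⟩, hext⟩ := he
  refine ⟨μ, inferInstance, ⟨hμ.1, ⟨?_⟩⟩, hμ.2⟩
  intro A hA hTA
  rw [eventuallyConst_set']
  by_contra hcon
  rw [not_or, ae_eq_empty, ae_eq_univ] at hcon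
  obtain ⟨hA0, hA1⟩ := hcon
  have hTA' : T ⁻¹' Aᶜ = Aᶜ := by rw [preimage_compl, hTA]
  obtain ⟨ν₁, i₁, f₁, z₁⟩ := cond_facts (μ : Measure X) hμ.1 hA hTA hA0
  obtain ⟨ν₂, i₂, f₂, z₂⟩ := cond_facts (μ : Measure X) hμ.1 hA.compl hTA' hA1
  have a0 : 0 < (μ : Measure X).real A := by
    rw [measureReal_def]; exact ENNReal.toReal_pos hA0 (measure_ne_top _ _)
  have a1 : 0 < (μ : Measure X).real Aᶜ := by
    rw [measureReal_def]; exact ENNReal.toReal_pos hA1 (measure_ne_top _ _)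
  have hsum : (μ : Measure X).real A + (μ : Measure X).real Aᶜ = 1 := by
    rw [measureReal_add_measureReal_compl hA]; simp
  have notbig : ∀ (ν : ProbabilityMeasure X) (B : Set X), 0 < (μ : Measure X).real B →
      MeasurePreserving T (ν : Measure X) (ν : Measure X) →
      (∀ g : X → ℝ, ∫ x, g x ∂(ν : Measure X) =
        ((μ : Measure X).real B)⁻¹ * ∫ x in B, g x ∂(μ : Measure X)) →
      ∀ θ > 0, ∃ m : ℕ, 0 < m ∧ ∃ c, IsCode T ε (Iio m) c ∧
        ∫ x in B, c x ∂(μ : Measure X) < m * (s + θ) * (μ : Measure X).real B := by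
    intro ν B hB hν hf θ hθ
    by_contra hcon
    push Not at hcon
    refine hmax (s + θ) (by linarith) ⟨ν, hν, fun m hm c hc => ?_⟩
    have := hcon m hm c hc
    rw [hf, inv_mul_eq_div, le_div_iff₀ hB]
    exact this
  have b₁ : ν₁ ∈ bigMeas T ε s := by
    refine ⟨i₁, fun m hm c hc => ?_⟩
    rw [f₁, inv_mul_eq_div, le_div_iff₀ a0]
    exact split_mem hT μ hμ.1 hA hTA hμ.2 (notbig ν₂ _ a1 i₂ f₂) m hm c hc
  have b₂ : ν₂ ∈ bigMeas T ε s := by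
    refine ⟨i₂, fun m hm c hc => ?_⟩
    rw [f₂, inv_mul_eq_div, le_div_iff₀ a1]
    refine split_mem hT μ hμ.1 hA.compl hTA' hμ.2 ?_ m hm c hc
    rw [compl_compl]
    exact notbig ν₁ _ a0 i₁ f₁
  have hseg : Φ μ ∈ openSegment ℝ (Φ ν₁) (Φ ν₂) := by
    refine ⟨_, _, a0, a1, hsum, ?_⟩
    funext f
    simp only [Φ, Pi.add_apply, Pi.smul_apply, smul_eq_mul]
    rw [f₁, f₂, mul_inv_cancel_left₀ a0.ne', mul_inv_cancel_left₀ a1.ne',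
      integral_add_compl hA (cont_integrable _ f.continuous)]
  have q₁ := hext ⟨ν₁, b₁, rfl⟩ ⟨ν₂, b₂, rfl⟩ hseg
  have q₂ := hext ⟨ν₂, b₂, rfl⟩ ⟨ν₁, b₁, rfl⟩ (by rwa [openSegment_symm])
  have heq : (ν₁ : Measure X) = (ν₂ : Measure X) := by
    apply ext_of_forall_integral_eq_of_IsFiniteMeasure
    intro g
    exact congrFun (q₁.trans q₂.symm) g.toContinuousMap
  rw [compl_compl, ← heq] at z₂
  have := measure_univ (μ := (ν₁ : Measure X))
  rw [← union_compl_self A] at this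
  have h3 := measure_union_le (μ := (ν₁ : Measure X)) A Aᶜ
  rw [this, z₁, z₂] at h3
  simp at h3

end Extreme

section Tiling
variable [MetricSpace X] [CompactSpace X] [Nonempty X] [MeasurableSpace X] [BorelSpace X]
  {T : X → X} {ε : ℝ}

lemma tiling_code (hT : Continuous T) {r K n1 : ℕ} {t : ℝ} (ht : 0 < t) (l : Fin r → ℕ)
    (hl1 : ∀ i, 1 ≤ l i) (hl2 : ∀ i, l i ≤ n1) (ψ : Fin r → X → ℝ) (χ : X → ℝ)
    (hψc : ∀ i, Continuous (ψ i)) (hψ0 : ∀ i x, 0 ≤ ψ i x) (hχc : Continuous χ)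
    (hχ0 : ∀ x, 0 ≤ χ x) (hsum : ∀ x, ∑ i, ψ i x + χ x = 1)
    (hψs : ∀ i x y, 0 < ψ i x → 0 < ψ i y → ∀ k < l i, dist (T^[k] x) (T^[k] y) ≤ ε)
    (hle : ∑ i, Real.exp (-(l i * t)) ≤ 1 / 2) (hK : 0 < K) (g : Fin K → X → ℝ)
    (hgc : ∀ i, Continuous (g i)) (hg0 : ∀ i x, 0 ≤ g i x) (hg1 : ∀ x, ∑ i, g i x = 1)
    (hgs : ∀ i x y, 0 < g i x → 0 < g i y → dist x y ≤ ε) (N : ℕ) :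
    ∃ c, IsCode T ε (Iio N) c ∧ ∀ x, c x ≤ (if N = 0 then 0 else (N + n1) * t) +
      Real.log (2 * K) * ∑ i ∈ Finset.range N, χ (T^[i] x) := by
  induction N using Nat.strong_induction_on with
  | _ N ih =>
  rcases Nat.eq_zero_or_pos N with rfl | hN
  · refine ⟨fun _ => 0, ?_, by simp⟩
    simpa using IsCode.zero (T := T) (ε := ε)
  have hK' : (0:ℝ) < K := by exact_mod_cast hK
  have hK1 : (1:ℝ) ≤ K := by exact_mod_cast hK
  set L := Real.log (2 * K) with hL
  have hL0 : 0 ≤ L := Real.log_nonneg (by linarith)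
  have ih1 : ∀ i : Fin r, ∃ c, IsCode T ε (Iio (N - l i)) c ∧ ∀ x, c x ≤
      (if N - l i = 0 then 0 else (((N - l i : ℕ) : ℝ) + n1) * t) +
      L * ∑ j ∈ Finset.range (N - l i), χ (T^[j] x) := fun i => ih _ (by have := hl1 i; omega)
  obtain ⟨c', hc', hc'b⟩ := ih (N - 1) (by omega)
  choose d hd hdb using ih1
  refine ⟨_, IsCode.mix (J := Fin r ⊕ Fin K) hT
    (Sum.elim ψ (fun k x => χ x * g k x))
    (Sum.elim (fun i => Real.exp (-(l i * t))) (fun _ => Real.exp (-t) / (2 * K)))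
    (Sum.elim d (fun _ => c')) (Sum.elim l (fun _ => 1))
    (Sum.elim (fun i => Iio (N - l i)) (fun _ => Iio (N - 1))) ?_ ?_ ?_ ?_ ?_ ?_ ?_, ?_⟩
  · rintro (i | k)
    · exact hd i
    · exact hc'
  · rintro (i | k)
    · exact hψc i
    · exact hχc.mul (hgc k)
  · rintro (i | k) x
    · exact hψ0 i x
    · exact mul_nonneg (hχ0 x) (hg0 k x)
  · intro x
    simp only [Fintype.sum_sum_type, Sum.elim_inl, Sum.elim_inr]
    rw [← Finset.mul_sum, hg1, mul_one, hsum]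
  · rintro (i | k)
    · exact Real.exp_pos _
    · exact div_pos (Real.exp_pos _) (by positivity)
  · simp only [Fintype.sum_sum_type, Sum.elim_inl, Sum.elim_inr, Finset.sum_const,
      Finset.card_univ, Fintype.card_fin, nsmul_eq_mul]
    have h1 : (K:ℝ) * (Real.exp (-t) / (2 * K)) = Real.exp (-t) / 2 := by field_simp
    have h2 : Real.exp (-t) ≤ 1 := Real.exp_le_one_iff.2 (by linarith)
    rw [h1]; linarith
  · rintro (i | k) x y hx hy m hm
    · simp only [Sum.elim_inl, mem_Iio] at *
      rcases lt_or_ge m (l i) with h | h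
      · exact Or.inl (hψs i x y hx hy m h)
      · exact Or.inr ⟨m - l i, by omega, by omega⟩
    · simp only [Sum.elim_inr, mem_Iio] at *
      rcases Nat.eq_zero_or_pos m with rfl | h
      · left
        refine hgs k x y (pos_of_mul_pos_right hx (hχ0 x)) (pos_of_mul_pos_right hy (hχ0 y))
      · exact Or.inr ⟨m - 1, by omega, by omega⟩
  · intro x
    simp only [Fintype.sum_sum_type, Sum.elim_inl, Sum.elim_inr]
    rw [if_neg hN.ne']
    set R := ∑ j ∈ Finset.range (N - 1), χ (T^[j + 1] x) with hR
    have hsplit : ∑ i ∈ Finset.range N, χ (T^[i] x) = R + χ x := by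
      obtain ⟨N', rfl⟩ : ∃ N', N = N' + 1 := ⟨N - 1, by omega⟩
      rw [Finset.sum_range_succ']; simp [hR]
    have b1 : ∀ i, -Real.log (Real.exp (-(l i * t))) + d i (T^[l i] x) ≤ (N + n1) * t + L * R := by
      intro i
      rw [Real.log_exp]
      have h1 := hdb i (T^[l i] x)
      have h2 : ∑ j ∈ Finset.range (N - l i), χ (T^[j] (T^[l i] x)) ≤ R := by
        have e1 : ∑ j ∈ Finset.range (N - l i), χ (T^[j] (T^[l i] x)) =
            ∑ j ∈ Finset.Ico (l i) N, χ (T^[j] x) := by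
          rw [Finset.sum_Ico_eq_sum_range]
          refine Finset.sum_congr rfl fun j _ => ?_
          rw [← Function.iterate_add_apply, add_comm]
        have e2 : R = ∑ j ∈ Finset.Ico 1 N, χ (T^[j] x) := by
          rw [Finset.sum_Ico_eq_sum_range]
          refine Finset.sum_congr rfl fun j _ => ?_
          rw [add_comm]
        rw [e1, e2]
        exact Finset.sum_le_sum_of_subset_of_nonneg
          (Finset.Ico_subset_Ico_left (hl1 i)) fun _ _ _ => hχ0 _
      have h3 := mul_le_mul_of_nonneg_left h2 hL0
      have h4 : l i * t + (if N - l i = 0 then 0 else (((N - l i : ℕ) : ℝ) + n1) * t) ≤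
          (N + n1) * t := by
        have hl2' : (l i : ℝ) ≤ n1 := by exact_mod_cast hl2 i
        split_ifs with h
        · have : (l i : ℝ) ≤ N + n1 := by
            have : (0:ℝ) ≤ N := Nat.cast_nonneg _
            linarith
          rw [add_zero]; exact mul_le_mul_of_nonneg_right this ht.le
        · rw [Nat.cast_sub (by omega)]
          apply le_of_eq; ring
      linarith
    have b2 : -Real.log (Real.exp (-t) / (2 * K)) + c' (T^[1] x) ≤ (N + n1) * t + L * R + L := by
      rw [Real.log_div (Real.exp_pos _).ne' (by positivity), Real.log_exp]
      have h1 := hc'b (T^[1] x)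
      have h2 : ∑ j ∈ Finset.range (N - 1), χ (T^[j] (T^[1] x)) = R :=
        Finset.sum_congr rfl fun j _ => by rw [← Function.iterate_add_apply]
      rw [h2] at h1
      have h4 : t + (if N - 1 = 0 then 0 else (((N - 1 : ℕ) : ℝ) + n1) * t) ≤
          (N + n1) * t := by
        have h1N : (1 : ℝ) ≤ N := by exact_mod_cast hN
        have hn : (0:ℝ) ≤ n1 := Nat.cast_nonneg _
        split_ifs with h
        · nlinarith
        · rw [Nat.cast_sub (by omega)]
          apply le_of_eq; push_cast; ring
      linarith
    calc _ ≤ ∑ i, ψ i x * ((N + n1) * t + L * R) +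
          ∑ k, χ x * g k x * ((N + n1) * t + L * R + L) := by
          refine add_le_add (Finset.sum_le_sum fun i _ => ?_) (Finset.sum_le_sum fun k _ => ?_)
          · exact mul_le_mul_of_nonneg_left (b1 i) (hψ0 i x)
          · exact mul_le_mul_of_nonneg_left b2 (mul_nonneg (hχ0 x) (hg0 k x))
      _ = (∑ i, ψ i x + χ x) * ((N + n1) * t + L * R) + χ x * L := by
          rw [← Finset.sum_mul, ← Finset.sum_mul, ← Finset.mul_sum, hg1]; ring
      _ = _ := by rw [hsum, hsplit]; ring

lemma tiling_sets (hT : IsHomeomorph T) (μ : Measure X) [IsProbabilityMeasure μ]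
    (hμ : Ergodic T μ) (hε : 0 < ε) {δ s' t η : ℝ} (hδ : 0 < δ) (hs' : s' < t) (ht : 0 < t)
    (hη : 0 < η) (Q : Set ℕ) (hQ : ∀ k, ∃ n ≥ k, n ∈ Q) (F : ℕ → Finset X)
    (hF1 : ∀ n ∈ Q, ((F n).card : ℝ) ≤ Real.exp (n * s'))
    (hF2 : ∀ n ∈ Q, ENNReal.ofReal δ < μ (⋃ x ∈ F n, dynBall T n x (ε / 2))) :
    ∃ (r n1 : ℕ) (l : Fin r → ℕ) (O : Fin r → Set X), (∀ i, 1 ≤ l i) ∧ (∀ i, l i ≤ n1) ∧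
      (∀ i, IsOpen (O i)) ∧
      (∀ i, ∀ y ∈ O i, ∀ z ∈ O i, ∀ k < l i, dist (T^[k] y) (T^[k] z) ≤ ε) ∧
      (∑ i, Real.exp (-(l i * t)) ≤ 1 / 2) ∧
      1 - ENNReal.ofReal η < μ (⋃ i, O i) := by
  classical
  have hTc := hT.continuous
  have hopen : ∀ m, IsOpenMap T^[m] := by
    intro m
    induction m with
    | zero => exact IsOpenMap.id
    | succ m ih => exact ih.comp hT.isOpenMap
  have hinj : ∀ m, Function.Injective T^[m] := fun m => hT.injective.iterate m
  set U : ℕ → Set X := fun n => ⋃ x ∈ F n, dynBall T n x (ε / 2) with hU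
  have hUo : ∀ n, IsOpen (U n) := fun n =>
    isOpen_biUnion fun x _ => isOpen_dynBall hTc n x (half_pos hε)
  set B : ℕ → Set X := fun k => ⋃ n ∈ {n | k ≤ n ∧ n ∈ Q}, U n with hB
  have hBo : ∀ k, IsOpen (B k) := fun k => isOpen_biUnion fun n _ => hUo n
  have hBanti : Antitone B := by
    intro k k' hk
    exact biUnion_subset_biUnion_left fun n hn => ⟨hk.trans hn.1, hn.2⟩
  set A : Set X := ⋂ k, B k with hA
  have hAm : MeasurableSet A := MeasurableSet.iInter fun k => (hBo k).measurableSet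
  have hAμ : ENNReal.ofReal δ ≤ μ A := by
    rw [hA, hBanti.measure_iInter (fun k => (hBo k).measurableSet.nullMeasurableSet)
      ⟨0, measure_ne_top _ _⟩]
    refine le_iInf fun k => ?_
    obtain ⟨n, hn, hnQ⟩ := hQ k
    refine (hF2 n hnQ).le.trans (measure_mono ?_)
    exact subset_biUnion_of_mem (u := U) (show n ∈ {n | k ≤ n ∧ n ∈ Q} from ⟨hn, hnQ⟩)
  -- the orbit of `A` has full measure
  set E : ℕ → Set X := fun M => ⋃ m ∈ {m | m < M}, T^[m] '' A with hE
  have hEmono : Monotone E := by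
    intro M M' h
    exact biUnion_subset_biUnion_left fun m hm => lt_of_lt_of_le hm h
  set D : Set X := ⋃ m, T^[m] '' A with hD
  have hED : ⋃ M, E M = D := by
    ext x
    simp only [hE, hD, mem_iUnion, mem_ofPred_eq]
    constructor
    · rintro ⟨M, m, _, h⟩; exact ⟨m, h⟩
    · rintro ⟨m, h⟩; exact ⟨m + 1, m, Nat.lt_succ_self m, h⟩
  have hDm : MeasurableSet D := by
    refine MeasurableSet.iUnion fun m => ?_
    have : IsOpenEmbedding T^[m] :=
      .of_continuous_injective_isOpenMap (hTc.iterate m) (hinj m) (hopen m)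
    exact this.measurableEmbedding.measurableSet_image.2 hAm
  have hDsub : D ⊆ T ⁻¹' D := by
    intro x hx
    obtain ⟨m, a, ha, rfl⟩ := mem_iUnion.1 hx
    exact mem_iUnion.2 ⟨m + 1, a, ha, Function.iterate_succ_apply' T m a⟩
  have hAD : A ⊆ D := fun a ha => mem_iUnion.2 ⟨0, a, ha, rfl⟩
  have hDμ : μ D = 1 := by
    rcases hμ.ae_empty_or_univ_of_ae_le_preimage hDm.nullMeasurableSet
      (Eventually.of_forall hDsub) with h | h
    · exfalso
      have h0 : μ D = 0 := by rw [measure_congr h, measure_empty]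
      have := hAμ.trans (measure_mono hAD)
      rw [h0] at this
      have h3 : 0 < ENNReal.ofReal δ := ENNReal.ofReal_pos.2 hδ
      exact absurd this (not_le.2 h3)
    · rw [measure_congr h, measure_univ]
  have hlt1 : 1 - ENNReal.ofReal η < 1 :=
    ENNReal.sub_lt_self ENNReal.one_ne_top one_ne_zero (ENNReal.ofReal_pos.2 hη).ne'
  obtain ⟨M, hM⟩ : ∃ M, 1 - ENNReal.ofReal η < μ (E M) := by
    have := tendsto_measure_iUnion_atTop (μ := μ) hEmono
    rw [hED, hDμ] at this
    exact (this.eventually_const_lt hlt1).exists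
  -- choice of `k`
  set q := Real.exp (-(t - s')) with hq
  have hq0 : 0 < q := Real.exp_pos _
  have hq1 : q < 1 := by rw [hq, Real.exp_lt_one_iff]; linarith
  obtain ⟨k, hkM, hk⟩ : ∃ k, M + 1 ≤ k ∧ M * Real.exp (M * t) * (q ^ k / (1 - q)) ≤ 1 / 2 := by
    have h1 : Tendsto (fun k : ℕ => M * Real.exp (M * t) * (q ^ k / (1 - q))) atTop (𝓝 0) := by
      have := ((tendsto_pow_atTop_nhds_zero_of_lt_one hq0.le hq1).div_const (1 - q)).const_mul
        (M * Real.exp (M * t))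
      simpa using this
    obtain ⟨k, h2, h3⟩ := ((h1.eventually_le_const (by norm_num : (0:ℝ) < 1 / 2)).and
      (eventually_ge_atTop (M + 1))).exists
    exact ⟨k, h3, h2⟩
  -- choice of `n1`
  set V : ℕ → Set X := fun n1 => ⋃ m ∈ {m | m < M}, T^[m] '' (⋃ n ∈ {n | n < n1 ∧ k ≤ n ∧ n ∈ Q}, U n)
    with hV
  have hVmono : Monotone V := by
    intro a b h
    refine iUnion₂_mono fun m _ => image_mono ?_
    exact biUnion_subset_biUnion_left fun n hn => ⟨lt_of_lt_of_le hn.1 h, hn.2⟩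
  obtain ⟨n1, hn1⟩ : ∃ n1, 1 - ENNReal.ofReal η < μ (V n1) := by
    have := tendsto_measure_iUnion_atTop (μ := μ) hVmono
    have h2 : 1 - ENNReal.ofReal η < μ (⋃ n, V n) := by
      refine hM.trans_le (measure_mono ?_)
      intro x hx
      obtain ⟨m, hm, a, ha, rfl⟩ := mem_iUnion₂.1 hx
      obtain ⟨n, hn, han⟩ := mem_iUnion₂.1 (mem_iInter.1 ha k)
      refine mem_iUnion.2 ⟨n + 1, mem_iUnion₂.2 ⟨m, hm, a, ?_, rfl⟩⟩
      exact mem_iUnion₂.2 ⟨n, ⟨Nat.lt_succ_self n, hn⟩, han⟩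
    exact (this.eventually_const_lt h2).exists
  let P : Finset (Σ _ : ℕ, ℕ × X) :=
    ((Finset.Ico k n1).filter (· ∈ Q)).sigma fun n => (Finset.range M) ×ˢ F n
  have hP : ∀ p ∈ P, k ≤ p.1 ∧ p.1 < n1 ∧ p.1 ∈ Q ∧ p.2.1 < M ∧ p.2.2 ∈ F p.1 := by
    intro p hp
    simp only [P, Finset.mem_sigma, Finset.mem_filter, Finset.mem_Ico, Finset.mem_product,
      Finset.mem_range] at hp
    tauto
  let e := P.equivFin.symm
  refine ⟨P.card, n1, fun i => (e i).1.1 - (e i).1.2.1,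
    fun i => T^[(e i).1.2.1] '' dynBall T (e i).1.1 (e i).1.2.2 (ε / 2), ?_, ?_, ?_, ?_, ?_, ?_⟩
  · intro i
    have := hP _ (e i).2
    show _ ≤ _
    beta_reduce
    omega
  · intro i
    have := hP _ (e i).2
    show _ ≤ _
    beta_reduce
    omega
  · intro i
    exact hopen _ _ (isOpen_dynBall hTc _ _ (half_pos hε))
  · rintro i _ ⟨y, hy, rfl⟩ _ ⟨z, hz, rfl⟩ j hj
    have := hP _ (e i).2
    beta_reduce at hj
    rw [← Function.iterate_add_apply, ← Function.iterate_add_apply]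
    have hy' := (dynDist_lt_iff T (half_pos hε)).1 hy (j + (e i).1.2.1) (by omega)
    have hz' := (dynDist_lt_iff T (half_pos hε)).1 hz (j + (e i).1.2.1) (by omega)
    have := dist_triangle_left (T^[j + (e i).1.2.1] y) (T^[j + (e i).1.2.1] z)
      (T^[j + (e i).1.2.1] (e i).1.2.2)
    linarith
  · have e1 : ∑ i, Real.exp (-(((e i).1.1 - (e i).1.2.1 : ℕ) * t)) =
        ∑ p ∈ P, Real.exp (-((p.1 - p.2.1 : ℕ) * t)) := by
      rw [Equiv.sum_comp e (fun p : P => Real.exp (-((p.1.1 - p.1.2.1 : ℕ) * t)))]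
      exact Finset.sum_coe_sort P (fun p => Real.exp (-((p.1 - p.2.1 : ℕ) * t)))
    rw [e1]
    calc ∑ p ∈ P, Real.exp (-((p.1 - p.2.1 : ℕ) * t))
        ≤ ∑ p ∈ P, Real.exp (M * t) * Real.exp (-(p.1 * t)) := by
          refine Finset.sum_le_sum fun p hp => ?_
          have := hP p hp
          rw [← Real.exp_add, Real.exp_le_exp, Nat.cast_sub (by omega)]
          have h1 : (p.2.1 : ℝ) ≤ M := by exact_mod_cast this.2.2.2.1.le
          nlinarith
      _ = ∑ n ∈ (Finset.Ico k n1).filter (· ∈ Q),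
            (M * (F n).card : ℝ) * (Real.exp (M * t) * Real.exp (-(n * t))) := by
          rw [Finset.sum_sigma]
          refine Finset.sum_congr rfl fun n _ => ?_
          simp [Finset.sum_const, Finset.card_product]
      _ ≤ ∑ n ∈ (Finset.Ico k n1).filter (· ∈ Q), M * Real.exp (M * t) * q ^ n := by
          refine Finset.sum_le_sum fun n hn => ?_
          have h1 := hF1 n (Finset.mem_filter.1 hn).2
          have h2 : q ^ n = Real.exp (n * s') * Real.exp (-(n * t)) := by
            rw [hq, ← Real.exp_nat_mul, ← Real.exp_add]; congr 1; ring
          rw [h2]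
          have : (M * (F n).card : ℝ) * (Real.exp (M * t) * Real.exp (-(n * t))) =
            (M * Real.exp (M * t) * Real.exp (-(n * t))) * (F n).card := by ring
          rw [this]
          have := mul_le_mul_of_nonneg_left h1
            (by positivity : 0 ≤ M * Real.exp (M * t) * Real.exp (-(n * t)))
          linarith
      _ ≤ ∑ n ∈ Finset.Ico k n1, M * Real.exp (M * t) * q ^ n :=
          Finset.sum_le_sum_of_subset_of_nonneg (Finset.filter_subset _ _)
            fun _ _ _ => by positivity
      _ = M * Real.exp (M * t) * ∑ n ∈ Finset.Ico k n1, q ^ n := by rw [Finset.mul_sum]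
      _ ≤ M * Real.exp (M * t) * (q ^ k / (1 - q)) :=
          mul_le_mul_of_nonneg_left (geom_sum_Ico_le_of_lt_one hq0.le hq1) (by positivity)
      _ ≤ 1 / 2 := hk
  · refine hn1.trans_le (measure_mono ?_)
    intro x hx
    obtain ⟨m, hm, a, ha, rfl⟩ := mem_iUnion₂.1 hx
    obtain ⟨n, hn, han⟩ := mem_iUnion₂.1 ha
    obtain ⟨y, hy, hay⟩ := mem_iUnion₂.1 han
    have hp : (⟨n, (m, y)⟩ : Σ _ : ℕ, ℕ × X) ∈ P := by
      simp only [P, Finset.mem_sigma, Finset.mem_filter, Finset.mem_Ico, Finset.mem_product,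
        Finset.mem_range]
      exact ⟨⟨⟨hn.2.1, hn.1⟩, hn.2.2⟩, hm, hy⟩
    refine mem_iUnion.2 ⟨e.symm ⟨_, hp⟩, ?_⟩
    simp only [Equiv.apply_symm_apply]
    exact ⟨a, hay, rfl⟩

lemma le_katokEntLower (hT : IsHomeomorph T) (μ : Measure X) [IsProbabilityMeasure μ]
    (hμ : Ergodic T μ) (hε : 0 < ε) {δ s : ℝ} (hδ : δ ∈ Ioo (0:ℝ) 1)
    (hs : ∀ m : ℕ, 0 < m → ∀ c, IsCode T ε (Iio m) c → m * s ≤ ∫ x, c x ∂μ) :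
    (s : EReal) ≤ katokEntLower T μ (ε / 2) δ := by
  by_contra hcon
  push Not at hcon
  have hTc := hT.continuous
  obtain ⟨s', h1, h2⟩ := EReal.lt_iff_exists_real_btwn.1 hcon
  have h2 : s' < s := by exact_mod_cast h2
  have hfreq := frequently_lt_of_liminf_lt (by isBoundedDefault) h1
  let Q : Set ℕ := {n | 0 < n ∧ Real.log (katokNum T μ n (ε / 2) δ) / n < s'}
  have hQ : ∀ k, ∃ n ≥ k, n ∈ Q := by
    intro k
    obtain ⟨n, h, hn⟩ := (hfreq.and_eventually (eventually_ge_atTop (k + 1))).exists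
    exact ⟨n, by omega, by omega, by exact_mod_cast h⟩
  have hs'0 : 0 < s' := by
    obtain ⟨n, -, hn0, hn⟩ := hQ 0
    refine lt_of_le_of_lt (div_nonneg (Real.log_natCast_nonneg _) (Nat.cast_nonneg _)) hn
  have hspec := fun n => katokNum_spec hTc (half_pos hε) n μ hδ
  choose hpos _ F hF2 hFc using hspec
  obtain ⟨t, hst, hts⟩ := exists_between h2
  obtain ⟨K, g, hK, hgc, hg0, hg1, hgs⟩ := exists_base_pou (X := X) hε
  have hK1 : (1:ℝ) ≤ K := by exact_mod_cast hK
  set L := Real.log (2 * K) with hL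
  have hL0 : 0 ≤ L := Real.log_nonneg (by linarith)
  set η := (s - t) / (2 * (L + 1)) with hη
  have hη0 : 0 < η := div_pos (by linarith) (by linarith)
  have hηL : t + L * η < s := by
    have : (L + 1) * η = (s - t) / 2 := by rw [hη]; field_simp
    nlinarith
  obtain ⟨r, n1, l, O, hl1, hl2, hO, hOd, hle, hOμ⟩ := tiling_sets hT μ hμ hε hδ.1 hst
    (hs'0.trans hst) hη0 Q hQ F (fun n hn => by
      rw [hFc]
      have hp : (0:ℝ) < katokNum T μ n (ε / 2) δ := by exact_mod_cast hpos n
      rw [← Real.log_le_iff_le_exp hp]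
      have hn0 : (0:ℝ) < n := by exact_mod_cast hn.1
      have := (div_lt_iff₀ hn0).1 hn.2
      linarith) (fun n _ => hF2 n)
  obtain ⟨C, hCO, hCc, hCμ⟩ := (isOpen_iUnion hO).exists_lt_isClosed hOμ
  obtain ⟨f, hf⟩ := PartitionOfUnity.exists_isSubordinate hCc O hO hCO
  set χ : X → ℝ := fun x => 1 - ∑ i, f i x with hχ
  have hχc : Continuous χ :=
    continuous_const.sub (continuous_finsetSum _ fun i _ => (f i).continuous)
  have hχ0 : ∀ x, 0 ≤ χ x := fun x => by
    have := f.sum_le_one x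
    rw [finsum_eq_sum_of_fintype] at this
    simp only [hχ]; linarith
  have hχ1 : ∀ x, χ x ≤ 1 := fun x => by
    have : 0 ≤ ∑ i, f i x := Finset.sum_nonneg fun i _ => f.nonneg i x
    simp only [hχ]; linarith
  have hχC : ∀ x ∈ C, χ x = 0 := fun x hx => by
    have := f.sum_eq_one hx
    rw [finsum_eq_sum_of_fintype] at this
    simp only [hχ]; linarith
  have hχint : ∫ x, χ x ∂μ ≤ η := by
    have h1 : ∫ x, χ x ∂μ ≤ ∫ x, Cᶜ.indicator (fun _ => (1:ℝ)) x ∂μ := by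
      refine integral_mono (cont_integrable μ hχc)
        ((integrable_const 1).indicator hCc.measurableSet.compl) fun x => ?_
      by_cases hx : x ∈ C
      · simp [hx, hχC x hx]
      · simpa [hx] using hχ1 x
    rw [integral_indicator hCc.measurableSet.compl] at h1
    simp only [integral_const, MeasurableSet.univ, measureReal_restrict_apply, univ_inter,
      smul_eq_mul, mul_one] at h1
    refine h1.trans ?_
    have h2 : μ Cᶜ ≤ ENNReal.ofReal η := by
      rw [prob_compl_eq_one_sub hCc.measurableSet, tsub_le_iff_right, add_comm]
      exact tsub_le_iff_right.1 hCμ.le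
    exact ENNReal.toReal_le_of_le_ofReal hη0.le h2
  have key : ∀ N : ℕ, 0 < N → N * s ≤ (N + n1) * t + L * (N * η) := by
    intro N hN
    obtain ⟨c, hc, hcb⟩ := tiling_code (ε := ε) hTc (hs'0.trans hst) l hl1 hl2
      (fun i x => f i x) χ (fun i => (f i).continuous) (fun i x => f.nonneg i x) hχc hχ0
      (fun x => by simp [hχ]) (fun i x y hx hy k hk => by
        have hx' := hf i (subset_tsupport _ (Function.mem_support.2 hx.ne'))
        have hy' := hf i (subset_tsupport _ (Function.mem_support.2 hy.ne'))
        exact hOd i x hx' y hy' k hk) hle hK g hgc hg0 hg1 hgs N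
    have i1 := integral_sum_iterate μ hμ.toMeasurePreserving hTc hχc (Finset.range N) id
    have i2 : Integrable (fun x => ∑ i ∈ Finset.range N, χ (T^[i] x)) μ :=
      cont_integrable μ (continuous_finsetSum _ fun i _ => hχc.comp (hTc.iterate i))
    have i3 : Integrable (fun x => L * ∑ i ∈ Finset.range N, χ (T^[i] x)) μ := i2.const_mul L
    have i4 : Integrable (fun x => (N + n1) * t + L * ∑ i ∈ Finset.range N, χ (T^[i] x)) μ :=
      (integrable_const _).add i3
    simp only [if_neg hN.ne'] at hcb
    calc N * s ≤ ∫ x, c x ∂μ := hs N hN c hc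
      _ ≤ ∫ x, ((N + n1) * t + L * ∑ i ∈ Finset.range N, χ (T^[i] x)) ∂μ :=
          integral_mono (cont_integrable μ hc.continuous) i4 hcb
      _ = (N + n1) * t + L * (N * ∫ x, χ x ∂μ) := by
          have i5 : ∫ x, L * ∑ i ∈ Finset.range N, χ (T^[i] x) ∂μ =
              L * ∫ x, ∑ i ∈ Finset.range N, χ (T^[i] x) ∂μ := integral_const_mul _ _
          simp only [id, Finset.card_range] at i1
          rw [integral_add (integrable_const _) i3, i5, i1]
          simp
      _ ≤ _ := by
          have : (N:ℝ) * ∫ x, χ x ∂μ ≤ N * η :=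
            mul_le_mul_of_nonneg_left hχint (Nat.cast_nonneg _)
          have := mul_le_mul_of_nonneg_left this hL0
          linarith
  obtain ⟨N, hN⟩ := exists_nat_gt (n1 * t / (s - (t + L * η)))
  rw [div_lt_iff₀ (by linarith)] at hN
  have hN' := key (N + 1) (Nat.succ_pos N)
  push_cast at hN'
  nlinarith

end Tiling

section Theorems

variable [MetricSpace X] [CompactSpace X] [Nonempty X] [MeasurableSpace X] [BorelSpace X]

/-- Variational principle for the upper metric mean dimension in terms of the lower
Katok entropy (Proposition 5.2, first part). -/
theorem upper_mdim_eq_limsup_lowerKatok (T : X → X) (hT : IsHomeomorph T)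
    (δ : ℝ) (hδ : δ ∈ Set.Ioo (0:ℝ) 1) :
    mdimUpper T = limsup (fun ε : ℝ =>
      (⨆ μ ∈ ergodicMeasures T, katokEntLower T μ ε δ)
        / ((Real.log (1 / ε) : ℝ) : EReal)) (𝓝[>] (0:ℝ)) := by
  unfold mdimUpper
  apply le_antisymm
  · refine Real.limsup_ratio (sepEnt T univ)
      (fun ε => ⨆ μ ∈ ergodicMeasures T, katokEntLower T μ ε δ) fun ε hε => ?_
    obtain ⟨s, hs, μ, hμ, hμe, hc⟩ := exists_ergodic hT.continuous hε
    exact hs.trans ((le_katokEntLower hT μ hμe hε hδ hc).trans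
      (le_iSup₂ (f := fun (μ : Measure X) (_ : μ ∈ ergodicMeasures T) =>
        katokEntLower T μ (ε / 2) δ) μ ⟨hμ, hμe⟩))
  · refine Real.limsup_ratio (fun ε => ⨆ μ ∈ ergodicMeasures T, katokEntLower T μ ε δ)
      (sepEnt T univ) fun ε hε => ?_
    refine iSup₂_le fun μ hμ => ?_
    have := hμ.1
    exact katokEntLower_le_sepEnt hT.continuous hε μ hδ

end Theorems
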